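/- arXiv:2601.21952 — 2 statements merged into one kernel-verified Lean document; each statement's English description precedes it below -/
import Mathlib

section
/- Let p, q ≥ 2 be integers with 4 ≤ p + q ≤ 7, and λ_s = √((q−1)/(p−1)). Then there exists a function v : [0, ∞) → (0, ∞), continuous on [0, ∞) and C² on (0, ∞) with v(0) = 1, v′ extending continuously to 0 with v′(0) = 0, solving the minimal surface ODE v″/(1+v′²) + ((p−1)/r)·v′ − (q−1)/v = 0 on (0, ∞), such that v(r)/r → λ_s and v′(r) → λ_s as r → ∞, and such that the set {r > 0 : v(r) = λ_s·r} is infinite. -/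
open Real Filter

open scoped Topology NNReal

/-!
Write `a = p - 1`, `b = q - 1` and `v' r = r * c r`. Regularity at the axis turns the minimal
surface equation into a fixed point equation for `c`, whose nonlinearity is globally Lipschitz once
`c` is clamped to `[0, b / a]`. The contraction principle in a weighted norm gives a global
solution, and barriers show that it never leaves `[0, b / a]`, so that the clamp is harmless.

The equation is invariant under scaling, so in the variables `z = r / v`, `s = v'` and `t = log r`
it is an autonomous system in the plane, with the cone as the fixed point `z⁻¹ = s = √(b / a)`. A
Lyapunov function confines the orbit to a compact set and drives it to the fixed point. If `v`
eventually stopped crossing the cone, then `Y = d / dt (log |v - √(b / a) r|)` would solve a Riccati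
equation `Y' = -(Y² + α Y + β)` with `α → a + b - 1` and `β → a + b`. For
`(a + b - 1)² < 4 (a + b)` the limiting quadratic has no real root, so `Y` would blow up in finite
time.
-/

theorem exists_continuous_fixedPoint_of_weighted_contraction {X E : Type*} [TopologicalSpace X]
    [NormedAddCommGroup E] [NormedSpace ℝ E] [CompleteSpace E] {w : X → ℝ} (hw : Continuous w)
    (hw0 : ∀ x, 0 < w x) {T : (X → E) → X → E} (hT : ∀ σ, Continuous σ → Continuous (T σ))
    {B : ℝ} (hB : ∀ x, ‖T 0 x‖ ≤ B * w x) {k : ℝ≥0} (hk : k < 1)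
    (hlip : ∀ σ τ N, Continuous σ → Continuous τ → 0 ≤ N → (∀ x, ‖σ x - τ x‖ ≤ N * w x) →
      ∀ x, ‖T σ x - T τ x‖ ≤ k * N * w x) :
    ∃ σ, Continuous σ ∧ T σ = σ := by
  let F (h : BoundedContinuousFunction X E) (x : X) : E := (w x)⁻¹ • T (fun y => w y • h y) x
  have hsmul (h : BoundedContinuousFunction X E) : Continuous fun x => w x • h x :=
    hw.smul h.continuous
  have hF (h : BoundedContinuousFunction X E) : Continuous (F h) :=
    (hw.inv₀ fun x => (hw0 x).ne').smul (hT _ (hsmul h))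
  have hdist (h₁ h₂ : BoundedContinuousFunction X E) (x : X) :
      dist (F h₁ x) (F h₂ x) ≤ k * dist h₁ h₂ := by
    have hclose (y : X) : ‖w y • h₁ y - w y • h₂ y‖ ≤ dist h₁ h₂ * w y := by
      rw [← smul_sub, norm_smul, Real.norm_of_nonneg (hw0 y).le, mul_comm, ← dist_eq_norm]
      exact mul_le_mul_of_nonneg_right (h₁.dist_coe_le_dist y) (hw0 y).le
    rw [dist_eq_norm, ← smul_sub, norm_smul, norm_inv, Real.norm_of_nonneg (hw0 x).le,
      inv_mul_le_iff₀ (hw0 x), mul_comm (w x)]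
    exact hlip _ _ _ (hsmul h₁) (hsmul h₂) dist_nonneg hclose x
  have hbase (x : X) : ‖F 0 x‖ ≤ B := by
    have hzero : (fun y => w y • (0 : BoundedContinuousFunction X E) y) = 0 := by ext; simp
    simp only [F, hzero]
    rw [norm_smul, norm_inv, Real.norm_of_nonneg (hw0 x).le, inv_mul_le_iff₀ (hw0 x), mul_comm]
    exact hB x
  have hbound (h : BoundedContinuousFunction X E) (x : X) : ‖F h x‖ ≤ B + k * dist h 0 :=
    (norm_le_norm_add_norm_sub' _ (F 0 x)).trans
      (add_le_add (hbase x) ((dist_eq_norm _ _).symm.trans_le (hdist h 0 x)))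
  let Φ (h : BoundedContinuousFunction X E) : BoundedContinuousFunction X E :=
    .ofNormedAddCommGroup (F h) (hF h) _ (hbound h)
  have hΦ : ContractingWith k Φ := ⟨hk, LipschitzWith.of_dist_le_mul fun h₁ h₂ =>
    (BoundedContinuousFunction.dist_le (by positivity)).2 (hdist h₁ h₂)⟩
  have hfix (x : X) : F (hΦ.fixedPoint Φ) x = hΦ.fixedPoint Φ x :=
    DFunLike.congr_fun hΦ.fixedPoint_isFixedPt x
  exact ⟨fun x => w x • hΦ.fixedPoint Φ x, hsmul _,
    funext fun x => (inv_smul_eq_iff₀ (hw0 x).ne').1 (hfix x)⟩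

theorem le_of_hasDerivAt_neg_of_eq {f f' : ℝ → ℝ} {t₀ M : ℝ}
    (hf : ContinuousWithinAt f (Set.Ici t₀) t₀) (h₀ : f t₀ < M)
    (hf' : ∀ t > t₀, HasDerivAt f (f' t) t) (hneg : ∀ t > t₀, f t = M → f' t < 0)
    {t : ℝ} (ht : t₀ ≤ t) : f t ≤ M := by
  obtain rfl | ht := ht.eq_or_lt
  · exact h₀.le
  have hnear : ∀ᶠ x in 𝓝[>] t₀, f x < M :=
    (hf.mono Set.Ioi_subset_Ici_self).eventually (gt_mem_nhds h₀)
  obtain ⟨t₁, ht₁M, ht₀₁, ht₁⟩ := (hnear.and (Ioo_mem_nhdsGT ht)).exists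
  exact image_le_of_deriv_right_lt_deriv_boundary (B := fun _ => M) (B' := 0)
    (fun x hx => (hf' x (ht₀₁.trans_le hx.1)).continuousAt.continuousWithinAt)
    (fun x hx => (hf' x (ht₀₁.trans_le hx.1)).hasDerivWithinAt) ht₁M.le
    (fun x => hasDerivAt_const x M) (fun x hx => hneg x (ht₀₁.trans_le hx.1)) ⟨ht₁.le, le_rfl⟩

theorem tendsto_of_tendsto_of_isCompact {ι X Y Z : Type*} [TopologicalSpace X]
    [TopologicalSpace Y] [TopologicalSpace Z] [T2Space Y] {l : Filter ι} {K : Set X}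
    (hK : IsCompact K) {γ : ι → X} (hγ : ∀ᶠ i in l, γ i ∈ K) {f : X → Y} {y : Y}
    (hf : ContinuousOn f K) (hfy : Tendsto (fun i => f (γ i)) l (𝓝 y)) {g : X → Z} {z : Z}
    (hg : ContinuousOn g K) (hfg : ∀ x ∈ K, f x = y → g x = z) :
    Tendsto (fun i => g (γ i)) l (𝓝 z) := by
  refine (tendsto_iff_ultrafilter _ _ _).2 fun u hu => ?_
  have hmem : Tendsto γ u (𝓟 K) := tendsto_principal.2 (hu hγ)
  obtain ⟨x, hxK, hx⟩ := hK.ultrafilter_le_nhds (u.map γ) hmem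
  have hγx : Tendsto γ u (𝓝[K] x) := tendsto_inf.2 ⟨hx, hmem⟩
  have hfx : f x = y :=
    tendsto_nhds_unique ((hf x hxK).tendsto.comp hγx) (hfy.mono_left hu)
  exact hfg x hxK hfx ▸ (hg x hxK).tendsto.comp hγx

/-- Barbalat's lemma. -/
theorem tendsto_deriv_zero_of_uniformContinuousOn {f f' : ℝ → ℝ} {t₀ L : ℝ}
    (hf : ∀ t ≥ t₀, HasDerivAt f (f' t) t) (hL : Tendsto f atTop (𝓝 L))
    (hf' : UniformContinuousOn f' (Set.Ici t₀)) : Tendsto f' atTop (𝓝 0) := by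
  refine Metric.tendsto_nhds.2 fun ε hε => ?_
  obtain ⟨δ, hδ, hclose⟩ := Metric.uniformContinuousOn_iff.1 hf' (ε / 2) (half_pos hε)
  have hslope : Tendsto (fun t => (f (t + δ / 2) - f t) / (t + δ / 2 - t)) atTop (𝓝 0) := by
    simpa using
      ((hL.comp (tendsto_atTop_add_const_right _ (δ / 2) tendsto_id)).sub hL).div_const (δ / 2)
  filter_upwards [eventually_ge_atTop t₀, Metric.tendsto_nhds.1 hslope (ε / 2) (half_pos hε)]
    with t ht hsmall
  obtain ⟨c, hc, hfc⟩ := exists_hasDerivAt_eq_slope f f' (by linarith : t < t + δ / 2)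
    (fun x hx => (hf x (ht.trans hx.1)).continuousAt.continuousWithinAt)
    (fun x hx => hf x (ht.trans hx.1.le))
  rw [← hfc] at hsmall
  have hdist : dist t c < δ := by
    rw [Real.dist_eq, abs_lt]; constructor <;> linarith [hc.1, hc.2]
  linarith [hclose t ht c (ht.trans hc.1.le) hdist, dist_triangle (f' t) (f' c) 0]

theorem tendsto_deriv_zero_along_integralCurve {E : Type*} [NormedAddCommGroup E]
    [NormedSpace ℝ E] {V : E → E} {γ : ℝ → E} {K : Set E} {t₀ : ℝ}
    (hγ : IsIntegralCurveOn γ (fun _ => V) (Set.Ici t₀)) (hK : IsCompact K)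
    (hV : ContinuousOn V K) (hmem : ∀ t ≥ t₀, γ t ∈ K) {f : ℝ → ℝ} {Φ : E → ℝ} {L : ℝ}
    (hΦ : ContinuousOn Φ K) (hf : ∀ t ≥ t₀, HasDerivAt f (Φ (γ t)) t)
    (hL : Tendsto f atTop (𝓝 L)) : Tendsto (fun t => Φ (γ t)) atTop (𝓝 0) := by
  obtain ⟨C, hC⟩ := hK.exists_bound_of_continuousOn hV
  have hlip : LipschitzOnWith C.toNNReal γ (Set.Ici t₀) :=
    (convex_Ici t₀).lipschitzOnWith_of_nnnorm_hasDerivWithin_le hγ fun t ht =>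
      NNReal.le_toNNReal_of_coe_le (hC _ (hmem t ht))
  exact tendsto_deriv_zero_of_uniformContinuousOn hf hL
    ((hK.uniformContinuousOn_of_continuous hΦ).comp hlip.uniformContinuousOn hmem)

theorem not_eventually_hasDerivAt_riccati {Y c β : ℝ → ℝ} {c₀ β₀ : ℝ}
    (hc : Tendsto c atTop (𝓝 c₀)) (hβ : Tendsto β atTop (𝓝 β₀)) (hdisc : c₀ ^ 2 < 4 * β₀) :
    ¬ ∀ᶠ t in atTop, HasDerivAt Y (-(Y t ^ 2 + c t * Y t + β t)) t := by
  intro hY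
  obtain ⟨δ, hδdisc, hδ, hδ1⟩ :
      ∃ δ, c₀ ^ 2 < 4 * (1 - δ) * (β₀ - δ) ∧ 0 < δ ∧ δ < 1 := by
    have hcont : ContinuousAt (fun δ => 4 * (1 - δ) * (β₀ - δ)) 0 := by fun_prop
    have hnear := hcont.eventually (lt_mem_nhds (by simpa using hdisc))
    exact ((hnear.filter_mono nhdsWithin_le_nhds).and (Ioo_mem_nhdsGT one_pos)).exists
  have hdiscEv : ∀ᶠ t in atTop, c t ^ 2 < 4 * (1 - δ) * (β t - δ) :=
    (hc.pow 2).eventually_lt ((hβ.sub_const δ).const_mul _) hδdisc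
  obtain ⟨T, hT⟩ := eventually_atTop.1 (hY.and hdiscEv)
  have hatan : ∀ t ≥ T, HasDerivAt (fun t => arctan (Y t))
      (1 / (1 + Y t ^ 2) * -(Y t ^ 2 + c t * Y t + β t)) t := fun t ht => (hT t ht).1.arctan
  have hspeed : ∀ t ≥ T, 1 / (1 + Y t ^ 2) * -(Y t ^ 2 + c t * Y t + β t) ≤ -δ := by
    intro t ht
    rw [one_div_mul_eq_div, div_le_iff₀ (by positivity)]
    nlinarith [(hT t ht).2, sq_nonneg (2 * (1 - δ) * Y t + c t)]
  have hlen : T < T + π / δ := by linarith [div_pos pi_pos hδ]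
  obtain ⟨x, hx, hslope⟩ := exists_hasDerivAt_eq_slope (fun t => arctan (Y t)) _ hlen
    (fun x hx => (hatan x hx.1).continuousAt.continuousWithinAt) (fun x hx => hatan x hx.1.le)
  have hdrop := hspeed x hx.1.le
  rw [hslope, add_sub_cancel_left, div_le_iff₀ (by positivity), neg_mul,
    mul_div_cancel₀ _ hδ.ne'] at hdrop
  linarith [neg_pi_div_two_lt_arctan (Y (T + π / δ)), arctan_lt_pi_div_two (Y T)]

/-! ### Radial moments -/

/-- The solution `A` of `r A' + (a + 1) A = g` that is regular at `r = 0`. The integral is scaled to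
the unit interval so that the formula remains meaningful there. -/
noncomputable def radialMoment (a : ℝ) (g : ℝ → ℝ) (r : ℝ) : ℝ :=
  ∫ x in (0 : ℝ)..1, x ^ a * g (r * x)

section RadialMoment

variable {a r : ℝ} {g h : ℝ → ℝ}

theorem continuous_radialMoment (ha : 0 ≤ a) (hg : Continuous g) :
    Continuous (radialMoment a g) := by
  have := continuous_rpow_const ha
  apply intervalIntegral.continuous_parametric_intervalIntegral_of_continuous'
  unfold Function.uncurry
  fun_prop

theorem radialMoment_sub (ha : 0 ≤ a) (hg : Continuous g) (hh : Continuous h) :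
    radialMoment a (g - h) r = radialMoment a g r - radialMoment a h r := by
  have := continuous_rpow_const ha
  unfold radialMoment
  rw [← intervalIntegral.integral_sub]
  · simp only [Pi.sub_apply, mul_sub]
  all_goals exact Continuous.intervalIntegrable (by fun_prop) _ _

theorem radialMoment_at_zero (ha : 0 ≤ a) : radialMoment a g 0 = g 0 / (a + 1) := by
  simp only [radialMoment, zero_mul, intervalIntegral.integral_mul_const]
  rw [integral_rpow (.inl (by linarith)), one_rpow, zero_rpow (by linarith)]
  ring

theorem radialMoment_nonneg (hg : ∀ y, 0 ≤ g y) : 0 ≤ radialMoment a g r :=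
  intervalIntegral.integral_nonneg zero_le_one fun _ hx =>
    mul_nonneg (rpow_nonneg hx.1 a) (hg _)

theorem abs_radialMoment_le (ha : 0 ≤ a) {B : ℝ}
    (hg : ∀ x ∈ Set.Icc (0 : ℝ) 1, |g (r * x)| ≤ B) :
    |radialMoment a g r| ≤ B := by
  have hle := intervalIntegral.norm_integral_le_of_norm_le_const (a := (0 : ℝ)) (b := 1)
    (f := fun x => x ^ a * g (r * x)) (C := B) fun x hx => by
      rw [Set.uIoc_of_le zero_le_one] at hx
      rw [norm_mul, Real.norm_of_nonneg (rpow_nonneg hx.1.le a)]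
      exact (mul_le_of_le_one_left (norm_nonneg _) (rpow_le_one hx.1.le hx.2 ha)).trans
        (hg x ⟨hx.1.le, hx.2⟩)
  simpa [radialMoment] using hle

theorem abs_radialMoment_le_sub (ha : 0 ≤ a) {w w' : ℝ → ℝ} (hw : ∀ y, HasDerivAt w (w' y) y)
    (hw' : Continuous w') (hg : ∀ y, |g y| ≤ y * w' y) :
    |radialMoment a g r| ≤ w r - w 0 := by
  have hint : IntervalIntegrable (fun x => w' (r * x) * r) MeasureTheory.volume 0 1 :=
    Continuous.intervalIntegrable (by fun_prop) _ _
  have hderiv : ∀ x ∈ Set.uIcc (0 : ℝ) 1, HasDerivAt (fun x => w (r * x)) (w' (r * x) * r) x :=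
    fun x _ => (hw (r * x)).comp x (hasDerivAt_const_mul r)
  have hprim := intervalIntegral.integral_eq_sub_of_hasDerivAt hderiv hint
  rw [mul_one, mul_zero] at hprim
  rw [← hprim, radialMoment, ← Real.norm_eq_abs]
  refine intervalIntegral.norm_integral_le_of_norm_le zero_le_one
    (Eventually.of_forall fun x hx => ?_) hint
  have hgx : |g (r * x)| ≤ x * (w' (r * x) * r) := (hg (r * x)).trans_eq (by ring)
  have hpos : 0 ≤ w' (r * x) * r :=
    nonneg_of_mul_nonneg_right ((abs_nonneg _).trans hgx) hx.1
  rw [norm_mul, Real.norm_of_nonneg (rpow_nonneg hx.1.le a)]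
  calc x ^ a * |g (r * x)| ≤ |g (r * x)| :=
        mul_le_of_le_one_left (abs_nonneg _) (rpow_le_one hx.1.le hx.2 ha)
    _ ≤ x * (w' (r * x) * r) := hgx
    _ ≤ w' (r * x) * r := mul_le_of_le_one_left hpos hx.2

theorem rpow_mul_radialMoment (hr : 0 < r) :
    r ^ (a + 1) * radialMoment a g r = ∫ x in (0 : ℝ)..r, x ^ a * g x := by
  have hscale := intervalIntegral.mul_integral_comp_mul_left (a := 0) (b := 1) (c := r)
    (f := fun x => x ^ a * g x)
  rw [mul_zero, mul_one] at hscale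
  rw [← hscale, rpow_add_one hr.ne', radialMoment, mul_assoc, mul_left_comm,
    ← intervalIntegral.integral_const_mul]
  congr 1
  refine intervalIntegral.integral_congr fun x hx => ?_
  rw [Set.uIcc_of_le zero_le_one] at hx
  simp only [mul_rpow hr.le hx.1, mul_assoc]

theorem hasDerivAt_radialMoment (ha : 0 ≤ a) (hg : Continuous g) (hr : 0 < r) :
    HasDerivAt (radialMoment a g) ((g r - (a + 1) * radialMoment a g r) / r) r := by
  have := continuous_rpow_const ha
  have hcont : Continuous fun x => x ^ a * g x := by fun_prop
  have hquot := (hcont.integral_hasStrictDerivAt 0 r).hasDerivAt.div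
    (hasDerivAt_rpow_const (p := a + 1) (.inl hr.ne')) (rpow_pos_of_pos hr _).ne'
  have heq : radialMoment a g =ᶠ[𝓝 r]
      (fun r => ∫ x in (0 : ℝ)..r, x ^ a * g x) / fun r => r ^ (a + 1) := by
    filter_upwards [lt_mem_nhds hr] with x hx
    rw [Pi.div_apply, ← rpow_mul_radialMoment hx,
      mul_div_cancel_left₀ _ (rpow_pos_of_pos hx _).ne']
  refine (hquot.congr_of_eventuallyEq heq).congr_deriv ?_
  rw [← rpow_mul_radialMoment hr, add_sub_cancel_right, rpow_add_one hr.ne']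
  field_simp

end RadialMoment

/-! ### Existence of the profile -/

/-- The function `v` with `v 0 = 1` and `v' r = r * c r`. The unknown `c = v' / r` is regular at the
axis. -/
noncomputable def profileOf (c : ℝ → ℝ) (r : ℝ) : ℝ :=
  1 + r ^ 2 * radialMoment 1 c r

section ProfileOf

variable {c : ℝ → ℝ} {r : ℝ}

theorem continuous_profileOf (hc : Continuous c) : Continuous (profileOf c) := by
  have := continuous_radialMoment zero_le_one hc
  unfold profileOf
  fun_prop

theorem one_le_profileOf (hc : ∀ y, 0 ≤ c y) : 1 ≤ profileOf c r :=
  le_add_of_nonneg_right (mul_nonneg (sq_nonneg r) (radialMoment_nonneg hc))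

theorem hasDerivAt_profileOf (hc : Continuous c) (hr : 0 < r) :
    HasDerivAt (profileOf c) (r * c r) r := by
  refine (((hasDerivAt_pow 2 r).mul
    (hasDerivAt_radialMoment zero_le_one hc hr)).const_add 1).congr_deriv ?_
  field_simp
  push_cast
  ring

end ProfileOf

/-- The weight of the Bielecki norm in which `slopeOperator` is a contraction. -/
noncomputable def growthWeight (C y : ℝ) : ℝ := exp (C * (y ^ 2 + y ^ 4 / 2))

section GrowthWeight

variable {C : ℝ}

theorem growthWeight_pos (C y : ℝ) : 0 < growthWeight C y := exp_pos _

theorem continuous_growthWeight (C : ℝ) : Continuous (growthWeight C) := by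
  unfold growthWeight
  fun_prop

theorem one_le_growthWeight (hC : 0 ≤ C) (y : ℝ) : 1 ≤ growthWeight C y :=
  one_le_exp (by positivity)

theorem growthWeight_le_growthWeight (hC : 0 ≤ C) {x y : ℝ} (hxy : |x| ≤ |y|) :
    growthWeight C x ≤ growthWeight C y := by
  have h4 := pow_le_pow_left₀ (abs_nonneg x) hxy 4
  simp only [Even.pow_abs (show Even 4 by decide)] at h4
  have h2 : x ^ 2 ≤ y ^ 2 := sq_le_sq.2 hxy
  unfold growthWeight
  gcongr

theorem hasDerivAt_growthWeight (C y : ℝ) :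
    HasDerivAt (growthWeight C) (growthWeight C y * (C * (2 * y + 2 * y ^ 3))) y := by
  refine (((hasDerivAt_pow 2 y).add ((hasDerivAt_pow 4 y).div_const 2)).const_mul
    C).exp.congr_deriv ?_
  simp only [growthWeight, Pi.add_apply]
  push_cast
  ring

theorem abs_profileOf_sub_le (hC : 0 ≤ C) {c d : ℝ → ℝ} (hc : Continuous c) (hd : Continuous d)
    {N : ℝ} (hN : 0 ≤ N) (hcd : ∀ y, |c y - d y| ≤ N * growthWeight C y) (r : ℝ) :
    |profileOf c r - profileOf d r| ≤ r ^ 2 * (N * growthWeight C r) := by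
  rw [profileOf, profileOf, add_sub_add_left_eq_sub, ← mul_sub,
    ← radialMoment_sub zero_le_one hc hd, abs_mul, abs_of_nonneg (sq_nonneg r)]
  gcongr
  refine abs_radialMoment_le zero_le_one fun x hx => (hcd (r * x)).trans ?_
  gcongr
  refine growthWeight_le_growthWeight hC ?_
  rw [abs_mul, abs_of_nonneg hx.1]
  exact mul_le_of_le_one_right (abs_nonneg r) hx.2

end GrowthWeight

/-- The right-hand side `g` when the minimal surface equation for the dimensions `a + 1` and `b + 1`
is written as `r c' + (a + 1) c = g` with `c = v' / r`. -/
noncomputable def slopeForcing (a b r c v : ℝ) : ℝ :=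
  b * (1 + r ^ 2 * c ^ 2) / v - a * r ^ 2 * c ^ 3

/-- The integral operator whose fixed points are the functions `c = v' / r` for the solutions `v`
with `v 0 = 1` that are regular at the axis. -/
noncomputable def slopeOperator (a b : ℝ) (c : ℝ → ℝ) : ℝ → ℝ :=
  radialMoment a fun y => slopeForcing a b y (c y) (profileOf c y)

section Slope

variable {a b M : ℝ}

theorem abs_slopeForcing_sub_le (ha : 0 ≤ a) (hb : 0 ≤ b) {r c d v w E : ℝ}
    (hc : c ∈ Set.Icc 0 M) (hd : d ∈ Set.Icc 0 M) (hv : 1 ≤ v) (hw : 1 ≤ w)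
    (hcd : |c - d| ≤ E) (hvw : |v - w| ≤ r ^ 2 * E) :
    |slopeForcing a b r c v - slopeForcing a b r d w|
      ≤ (b * (1 + M) ^ 2 + 3 * a * M ^ 2) * (r ^ 2 * (1 + r ^ 2)) * E := by
  obtain ⟨hc0, hcM⟩ := hc
  obtain ⟨hd0, hdM⟩ := hd
  have hM : 0 ≤ M := hc0.trans hcM
  have hE : 0 ≤ E := (abs_nonneg _).trans hcd
  have hsplit : slopeForcing a b r c v - slopeForcing a b r d w =
      b * (1 + r ^ 2 * d ^ 2) / (v * w) * (w - v) + b * r ^ 2 * (c + d) / v * (c - d)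
        - a * r ^ 2 * (c ^ 2 + c * d + d ^ 2) * (c - d) := by
    unfold slopeForcing
    field_simp
    ring
  have hprofile : |b * (1 + r ^ 2 * d ^ 2) / (v * w) * (w - v)|
      ≤ b * (1 + r ^ 2 * M ^ 2) * (r ^ 2 * E) := by
    rw [abs_mul, abs_of_nonneg (by positivity), abs_sub_comm]
    gcongr
    exact (div_le_self (by positivity) (one_le_mul_of_one_le_of_one_le hv hw)).trans (by gcongr)
  have hquadratic : |b * r ^ 2 * (c + d) / v * (c - d)| ≤ b * r ^ 2 * (M + M) * E := by
    rw [abs_mul, abs_of_nonneg (by positivity)]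
    gcongr
    exact (div_le_self (by positivity) hv).trans (by gcongr)
  have hcubic : |a * r ^ 2 * (c ^ 2 + c * d + d ^ 2) * (c - d)|
      ≤ a * r ^ 2 * (M ^ 2 + M * M + M ^ 2) * E := by
    rw [abs_mul, abs_of_nonneg (by positivity)]
    gcongr
  have hslack : 0 ≤ b * (r ^ 2 * E) * (M ^ 2 + r ^ 2 * (1 + 2 * M))
      + 3 * a * M ^ 2 * r ^ 2 * (r ^ 2 * E) := by positivity
  rw [hsplit]
  refine (abs_sub _ _).trans ((add_le_add_left (abs_add_le _ _) _).trans ?_)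
  linarith

theorem continuous_slopeForcing_profileOf {c : ℝ → ℝ} (hc : Continuous c) (hc0 : ∀ y, 0 ≤ c y) :
    Continuous fun y => slopeForcing a b y (c y) (profileOf c y) := by
  have hV := continuous_profileOf hc
  have hV0 : ∀ y, profileOf c y ≠ 0 := fun y => (one_pos.trans_le (one_le_profileOf hc0)).ne'
  unfold slopeForcing
  fun_prop (disch := assumption)

theorem abs_slopeOperator_sub_le (ha : 0 ≤ a) (hb : 0 ≤ b) {c d : ℝ → ℝ} (hc : Continuous c)
    (hd : Continuous d) (hcM : ∀ y, c y ∈ Set.Icc 0 M) (hdM : ∀ y, d y ∈ Set.Icc 0 M)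
    {N C : ℝ} (hN : 0 ≤ N) (hC : b * (1 + M) ^ 2 + 3 * a * M ^ 2 ≤ C)
    (hcd : ∀ y, |c y - d y| ≤ N * growthWeight C y) (r : ℝ) :
    |slopeOperator a b c r - slopeOperator a b d r| ≤ N / 2 * growthWeight C r := by
  have hC0 : 0 ≤ C := le_trans (by positivity) hC
  have hweight := continuous_growthWeight C
  have hpointwise (y : ℝ) : |slopeForcing a b y (c y) (profileOf c y)
      - slopeForcing a b y (d y) (profileOf d y)|
      ≤ y * (N / 2 * (growthWeight C y * (C * (2 * y + 2 * y ^ 3)))) := by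
    have hpos := growthWeight_pos C y
    calc _ ≤ (b * (1 + M) ^ 2 + 3 * a * M ^ 2) * (y ^ 2 * (1 + y ^ 2)) * (N * growthWeight C y) :=
          abs_slopeForcing_sub_le ha hb (hcM y) (hdM y)
            (one_le_profileOf fun y => (hcM y).1) (one_le_profileOf fun y => (hdM y).1)
            (hcd y) (abs_profileOf_sub_le hC0 hc hd hN hcd y)
      _ ≤ C * (y ^ 2 * (1 + y ^ 2)) * (N * growthWeight C y) := by gcongr
      _ = _ := by ring
  have hle := abs_radialMoment_le_sub (r := r) ha
    (fun y => (hasDerivAt_growthWeight C y).const_mul (N / 2)) (by fun_prop) hpointwise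
  rw [slopeOperator, slopeOperator, ← radialMoment_sub ha
    (continuous_slopeForcing_profileOf hc fun y => (hcM y).1)
    (continuous_slopeForcing_profileOf hd fun y => (hdM y).1)]
  have := growthWeight_pos C 0
  exact hle.trans (sub_le_self _ (by positivity))

theorem abs_slopeOperator_zero_le (ha : 0 ≤ a) (hb : 0 ≤ b) (r : ℝ) :
    |slopeOperator a b 0 r| ≤ b := by
  refine abs_radialMoment_le ha fun x _ => ?_
  simp [slopeForcing, profileOf, radialMoment, abs_of_nonneg hb]

theorem exists_fixedPoint_slopeOperator_projIcc (ha : 0 ≤ a) (hb : 0 ≤ b) (hM : 0 ≤ M) :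
    ∃ σ : ℝ → ℝ, Continuous σ ∧ slopeOperator a b (fun y => Set.projIcc 0 M hM (σ y)) = σ := by
  let C := b * (1 + M) ^ 2 + 3 * a * M ^ 2
  let clamp (σ : ℝ → ℝ) (y : ℝ) : ℝ := Set.projIcc 0 M hM (σ y)
  have hclamp {σ : ℝ → ℝ} (hσ : Continuous σ) : Continuous (clamp σ) :=
    continuous_subtype_val.comp (continuous_projIcc.comp hσ)
  have hmem (σ : ℝ → ℝ) (y : ℝ) : clamp σ y ∈ Set.Icc 0 M := Subtype.prop _
  have hclampLe (σ τ : ℝ → ℝ) (y : ℝ) : |clamp σ y - clamp τ y| ≤ |σ y - τ y| := by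
    have hdist := (LipschitzWith.projIcc hM).dist_le_mul (σ y) (τ y)
    rwa [NNReal.coe_one, one_mul] at hdist
  refine exists_continuous_fixedPoint_of_weighted_contraction
    (T := fun σ => slopeOperator a b (clamp σ)) (k := 1 / 2) (continuous_growthWeight C)
    (growthWeight_pos C) (fun σ hσ => continuous_radialMoment ha
      (continuous_slopeForcing_profileOf (hclamp hσ) fun y => (hmem σ y).1)) (B := b)
    (fun r => ?_) (by rw [← NNReal.coe_lt_coe]; norm_num) fun σ τ N hσ hτ hN hle r => ?_
  · have hzero : clamp 0 = 0 := funext fun y => by simp [clamp, Set.projIcc]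
    simp only [hzero]
    exact (abs_slopeOperator_zero_le ha hb r).trans
      (le_mul_of_one_le_right hb (one_le_growthWeight (by positivity) r))
  · refine (abs_slopeOperator_sub_le ha hb (hclamp hσ) (hclamp hτ) (hmem σ) (hmem τ) hN le_rfl
      (fun y => (hclampLe σ τ y).trans (hle y)) r).trans_eq ?_
    push_cast
    ring

end Slope

theorem slopeForcing_zero (a b r v : ℝ) : slopeForcing a b r 0 v = b / v := by
  simp [slopeForcing]

theorem slopeForcing_div_le {a b v : ℝ} (ha : 0 < a) (hb : 0 ≤ b) (hv : 1 ≤ v) (r : ℝ) :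
    slopeForcing a b r (b / a) v ≤ b := by
  have hle : b * (1 + r ^ 2 * (b / a) ^ 2) / v ≤ b * (1 + r ^ 2 * (b / a) ^ 2) :=
    div_le_self (by positivity) hv
  have heq : a * r ^ 2 * (b / a) ^ 3 = b * (r ^ 2 * (b / a) ^ 2) := by field_simp
  unfold slopeForcing
  linarith

theorem hasDerivAt_slopeOperator {a b r : ℝ} (ha : 0 ≤ a) {c : ℝ → ℝ} (hc : Continuous c)
    (hc0 : ∀ y, 0 ≤ c y) (hr : 0 < r) :
    HasDerivAt (slopeOperator a b c)
      ((slopeForcing a b r (c r) (profileOf c r) - (a + 1) * slopeOperator a b c r) / r) r :=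
  hasDerivAt_radialMoment ha (continuous_slopeForcing_profileOf hc hc0) hr

theorem slopeOperator_at_zero {a b : ℝ} (ha : 0 ≤ a) (c : ℝ → ℝ) :
    slopeOperator a b c 0 = b / (a + 1) := by
  simp [slopeOperator, radialMoment_at_zero ha, slopeForcing, profileOf]

theorem mem_Icc_of_slopeOperator_projIcc {a b : ℝ} (ha : 0 < a) (hb : 0 < b) (hM : 0 ≤ b / a)
    {σ : ℝ → ℝ} (hσ : Continuous σ)
    (hfix : slopeOperator a b (fun y => Set.projIcc 0 (b / a) hM (σ y)) = σ)
    {r : ℝ} (hr : 0 ≤ r) : σ r ∈ Set.Icc 0 (b / a) := by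
  let c (y : ℝ) : ℝ := Set.projIcc 0 (b / a) hM (σ y)
  have hc : Continuous c := continuous_subtype_val.comp (continuous_projIcc.comp hσ)
  have hc0 (y : ℝ) : 0 ≤ c y := (Set.projIcc 0 (b / a) hM (σ y)).2.1
  have hv (r : ℝ) : 1 ≤ profileOf c r := one_le_profileOf hc0
  have hderiv : ∀ r > 0, HasDerivAt σ
      ((slopeForcing a b r (c r) (profileOf c r) - (a + 1) * σ r) / r) r := fun r hr => by
    have := hasDerivAt_slopeOperator (b := b) ha.le hc hc0 hr
    rwa [show slopeOperator a b c = σ from hfix] at this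
  have hinit : σ 0 = b / (a + 1) := by rw [← hfix, slopeOperator_at_zero ha.le]
  constructor
  · refine neg_nonpos.1 <| le_of_hasDerivAt_neg_of_eq (f := -σ) (t₀ := 0) (M := 0)
      hσ.neg.continuousWithinAt ?_ (fun r hr => (hderiv r hr).neg) (fun r hr h0 => ?_) hr
    · rw [Pi.neg_apply, hinit, neg_lt_zero]
      positivity
    · have hσ0 : σ r = 0 := neg_eq_zero.1 h0
      have hcr : c r = 0 := by simp [c, hσ0, Set.projIcc]
      rw [hcr, hσ0, slopeForcing_zero, mul_zero, sub_zero, neg_lt_zero]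
      have := hv r
      positivity
  · refine le_of_hasDerivAt_neg_of_eq (t₀ := 0) hσ.continuousWithinAt ?_ hderiv
      (fun r hr hM' => ?_) hr
    · rw [hinit]
      gcongr
      linarith
    · have hcr : c r = b / a := by simp [c, hM', Set.projIcc, hM]
      rw [hcr, hM']
      refine div_neg_of_neg_of_pos ?_ hr
      have := slopeForcing_div_le ha hb.le (hv r) r
      have : 0 < b / a := by positivity
      have : (a + 1) * (b / a) = b + b / a := by field_simp
      linarith

theorem exists_eqOn_slopeOperator {a b : ℝ} (ha : 0 < a) (hb : 0 < b) :
    ∃ c : ℝ → ℝ, Continuous c ∧ (∀ y, 0 ≤ c y) ∧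
      Set.EqOn (slopeOperator a b c) c (Set.Ici 0) := by
  have hM : 0 ≤ b / a := by positivity
  obtain ⟨σ, hσ, hfix⟩ := exists_fixedPoint_slopeOperator_projIcc ha.le hb.le hM
  refine ⟨fun y => Set.projIcc 0 (b / a) hM (σ y),
    continuous_subtype_val.comp (continuous_projIcc.comp hσ),
    fun y => (Set.projIcc 0 (b / a) hM (σ y)).2.1, fun r hr => ?_⟩
  rw [hfix]
  simp only [Set.projIcc_of_mem hM (mem_Icc_of_slopeOperator_projIcc ha hb hM hσ hfix hr)]

/-- `v` is a profile of the minimal surface equation for the dimensions `a + 1` and `b + 1`,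
starting from `v 0 = 1`, and `s` is its slope `v'`, continuous up to the axis `r = 0`. -/
structure IsProfile (a b : ℝ) (v s : ℝ → ℝ) : Prop where
  continuousOn : ContinuousOn v (Set.Ici 0)
  continuousOn_slope : ContinuousOn s (Set.Ici 0)
  at_zero : v 0 = 1
  slope_at_zero : s 0 = 0
  pos : ∀ r ≥ 0, 0 < v r
  slope_nonneg : ∀ r ≥ 0, 0 ≤ s r
  hasDerivAt : ∀ r > 0, HasDerivAt v (s r) r
  hasDerivAt_slope : ∀ r > 0, HasDerivAt s ((1 + s r ^ 2) * (b / v r - a * s r / r)) r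

theorem exists_isProfile {a b : ℝ} (ha : 0 < a) (hb : 0 < b) : ∃ v s, IsProfile a b v s := by
  obtain ⟨c, hc, hc0, hfix⟩ := exists_eqOn_slopeOperator ha hb
  have hv (r : ℝ) : 0 < profileOf c r := one_pos.trans_le (one_le_profileOf hc0)
  refine ⟨profileOf c, fun r => r * c r, (continuous_profileOf hc).continuousOn,
    (continuous_id.mul hc).continuousOn, by simp [profileOf], zero_mul _, fun r _ => hv r,
    fun r hr => mul_nonneg hr (hc0 r), fun r hr => hasDerivAt_profileOf hc hr, fun r hr => ?_⟩
  have hcr : HasDerivAt c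
      ((slopeForcing a b r (c r) (profileOf c r) - (a + 1) * c r) / r) r := by
    have hop := hasDerivAt_slopeOperator (b := b) ha.le hc hc0 hr
    rw [hfix hr.le] at hop
    exact hop.congr_of_eventuallyEq (hfix.eventuallyEq_of_mem (Ici_mem_nhds hr)).symm
  refine ((hasDerivAt_id r).mul hcr).congr_deriv ?_
  have := (hv r).ne'
  simp only [id, slopeForcing]
  field_simp
  ring

/-! ### Phase plane dynamics -/

/-- The vector field of the minimal surface equation in the scale invariant variables
`(r / v, v')`, with `log r` as time. -/
def phaseField (a b : ℝ) (x : ℝ × ℝ) : ℝ × ℝ :=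
  (x.1 - x.1 ^ 2 * x.2, (1 + x.2 ^ 2) * (b * x.1 - a * x.2))

/-- An orbit of `phaseField` that stays in the region where `r / v` is positive and `v'` is
nonnegative. -/
structure IsPhaseOrbit (a b : ℝ) (γ : ℝ → ℝ × ℝ) : Prop where
  isIntegralCurve : IsIntegralCurve γ fun _ => phaseField a b
  fst_pos : ∀ t, 0 < (γ t).1
  snd_nonneg : ∀ t, 0 ≤ (γ t).2

/-- A quantity increasing along phase orbits. With `x = (tan φ, tan θ)` it is the logarithm of
`sin (θ + φ) ^ 2 * sin φ ^ (2 * a) * cos φ ^ (2 * b)`. -/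
noncomputable def lyapunov (a b : ℝ) (x : ℝ × ℝ) : ℝ :=
  2 * log (x.1 + x.2) + 2 * a * log x.1 - log (1 + x.2 ^ 2) - (a + b + 1) * log (1 + x.1 ^ 2)

/-- The derivative of `lyapunov` along phase orbits. -/
noncomputable def dissipation (a b : ℝ) (x : ℝ × ℝ) : ℝ :=
  2 * (a + b + 1) * (x.1 * x.2 - 1) ^ 2 * x.1 / ((x.1 + x.2) * (1 + x.1 ^ 2))

section Lyapunov

variable {a b : ℝ} {x : ℝ × ℝ}

theorem continuous_phaseField (a b : ℝ) : Continuous (phaseField a b) := by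
  unfold phaseField
  fun_prop

theorem dissipation_nonneg (hab : 0 ≤ a + b) (h₁ : 0 < x.1) (h₂ : 0 ≤ x.2) :
    0 ≤ dissipation a b x := by
  unfold dissipation
  have : 0 ≤ a + b + 1 := by linarith
  positivity

theorem mul_eq_one_of_dissipation_eq_zero (hab : 0 ≤ a + b) (h₁ : 0 < x.1) (h₂ : 0 ≤ x.2)
    (hx : dissipation a b x = 0) : x.1 * x.2 = 1 := by
  have hden : (x.1 + x.2) * (1 + x.1 ^ 2) ≠ 0 := by positivity
  have hab' : a + b + 1 ≠ 0 := by linarith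
  simpa [dissipation, hden, hab', h₁.ne', sub_eq_zero] using hx

theorem continuousOn_dissipation (a b : ℝ) :
    ContinuousOn (dissipation a b) (Set.Ioi 0 ×ˢ Set.Ici 0) := by
  intro x ⟨h₁, h₂⟩
  have h₁ : 0 < x.1 := h₁
  have h₂ : 0 ≤ x.2 := h₂
  have hden : (x.1 + x.2) * (1 + x.1 ^ 2) ≠ 0 := by positivity
  unfold dissipation
  exact ContinuousAt.continuousWithinAt (by fun_prop (disch := assumption))

theorem lyapunov_le (a b : ℝ) (h₁ : 0 < x.1) (h₂ : 0 ≤ x.2) :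
    lyapunov a b x ≤ 2 * a * log x.1 - (a + b) * log (1 + x.1 ^ 2) := by
  have hcauchy : log ((x.1 + x.2) ^ 2) ≤ log ((1 + x.2 ^ 2) * (1 + x.1 ^ 2)) :=
    log_le_log (by positivity) (by nlinarith [sq_nonneg (x.1 * x.2 - 1)])
  rw [log_pow, log_mul (by positivity) (by positivity)] at hcauchy
  push_cast at hcauchy
  unfold lyapunov
  linarith

theorem two_mul_log_le_log_one_add_sq {z : ℝ} (hz : 0 < z) : 2 * log z ≤ log (1 + z ^ 2) := by
  have hlog : log (z ^ 2) ≤ log (1 + z ^ 2) := log_le_log (by positivity) (by linarith)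
  rwa [log_pow, Nat.cast_ofNat] at hlog

theorem lyapunov_le_two_mul_log (hab : 0 ≤ a + b) (h₁ : 0 < x.1) (h₂ : 0 ≤ x.2) :
    lyapunov a b x ≤ 2 * a * log x.1 := by
  have hlog : 0 ≤ log (1 + x.1 ^ 2) := log_nonneg (by nlinarith)
  nlinarith [lyapunov_le a b h₁ h₂, mul_nonneg hab hlog]

theorem lyapunov_le_neg_two_mul_log (hab : 0 ≤ a + b) (h₁ : 0 < x.1) (h₂ : 0 ≤ x.2) :
    lyapunov a b x ≤ -(2 * b * log x.1) := by
  nlinarith [lyapunov_le a b h₁ h₂,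
    mul_le_mul_of_nonneg_left (two_mul_log_le_log_one_add_sq h₁) hab]

theorem lyapunov_nonpos (ha : 0 ≤ a) (hb : 0 ≤ b) (h₁ : 0 < x.1) (h₂ : 0 ≤ x.2) :
    lyapunov a b x ≤ 0 := by
  have hup := lyapunov_le_two_mul_log (add_nonneg ha hb) h₁ h₂
  have hlo := lyapunov_le_neg_two_mul_log (add_nonneg ha hb) h₁ h₂
  rcases le_total 0 (log x.1) with hlog | hlog
  · nlinarith
  · nlinarith

end Lyapunov

namespace IsPhaseOrbit

variable {a b : ℝ} {γ : ℝ → ℝ × ℝ}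

theorem hasDerivAt_fst (hγ : IsPhaseOrbit a b γ) (t : ℝ) :
    HasDerivAt (fun t => (γ t).1) ((γ t).1 - (γ t).1 ^ 2 * (γ t).2) t :=
  (ContinuousLinearMap.fst ℝ ℝ ℝ).hasFDerivAt.comp_hasDerivAt t (hγ.isIntegralCurve t)

theorem hasDerivAt_snd (hγ : IsPhaseOrbit a b γ) (t : ℝ) :
    HasDerivAt (fun t => (γ t).2) ((1 + (γ t).2 ^ 2) * (b * (γ t).1 - a * (γ t).2)) t :=
  (ContinuousLinearMap.snd ℝ ℝ ℝ).hasFDerivAt.comp_hasDerivAt t (hγ.isIntegralCurve t)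

theorem hasDerivAt_lyapunov (hγ : IsPhaseOrbit a b γ) (t : ℝ) :
    HasDerivAt (fun t => lyapunov a b (γ t)) (dissipation a b (γ t)) t := by
  have hz := hγ.fst_pos t
  have hs := hγ.snd_nonneg t
  have hz' := hγ.hasDerivAt_fst t
  have hs' := hγ.hasDerivAt_snd t
  have hsum : (γ t).1 + (γ t).2 ≠ 0 := by positivity
  have hz2 : 1 + (γ t).1 ^ 2 ≠ 0 := by positivity
  have hs2 : 1 + (γ t).2 ^ 2 ≠ 0 := by positivity
  refine ((((((hz'.add hs').log hsum).const_mul 2).add ((hz'.log hz.ne').const_mul (2 * a))).sub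
    (((hs'.pow 2).const_add 1).log hs2)).sub
    ((((hz'.pow 2).const_add 1).log hz2).const_mul (a + b + 1))).congr_deriv ?_
  simp only [dissipation, Pi.add_apply, Pi.pow_apply]
  field_simp
  push_cast
  ring

theorem monotone_lyapunov (hγ : IsPhaseOrbit a b γ) (hab : 0 ≤ a + b) :
    Monotone fun t => lyapunov a b (γ t) :=
  monotone_of_hasDerivAt_nonneg hγ.hasDerivAt_lyapunov fun t =>
    dissipation_nonneg hab (hγ.fst_pos t) (hγ.snd_nonneg t)

theorem exists_tendsto_lyapunov (hγ : IsPhaseOrbit a b γ) (ha : 0 ≤ a) (hb : 0 ≤ b) :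
    ∃ L, Tendsto (fun t => lyapunov a b (γ t)) atTop (𝓝 L) :=
  ⟨_, tendsto_atTop_ciSup (hγ.monotone_lyapunov (add_nonneg ha hb))
    ⟨0, Set.forall_mem_range.2 fun t =>
      lyapunov_nonpos ha hb (hγ.fst_pos t) (hγ.snd_nonneg t)⟩⟩

theorem fst_mem_Icc (hγ : IsPhaseOrbit a b γ) (ha : 0 < a) (hb : 0 < b) {t : ℝ} (ht : 0 ≤ t) :
    (γ t).1 ∈ Set.Icc (exp (lyapunov a b (γ 0) / (2 * a)))
      (exp (-lyapunov a b (γ 0) / (2 * b))) := by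
  have hab : 0 ≤ a + b := by positivity
  have hmono := hγ.monotone_lyapunov hab ht
  have hz := hγ.fst_pos t
  rw [Set.mem_Icc, ← le_log_iff_exp_le hz, ← log_le_iff_le_exp hz,
    div_le_iff₀' (by positivity), le_div_iff₀' (by positivity)]
  exact ⟨hmono.trans (lyapunov_le_two_mul_log hab hz (hγ.snd_nonneg t)),
    le_neg.1 (hmono.trans (lyapunov_le_neg_two_mul_log hab hz (hγ.snd_nonneg t)))⟩

theorem exists_snd_le (hγ : IsPhaseOrbit a b γ) (ha : 0 < a) (hb : 0 < b) :
    ∃ M, ∀ t ≥ 0, (γ t).2 ≤ M := by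
  set z₁ := exp (-lyapunov a b (γ 0) / (2 * b))
  set M := max ((γ 0).2 + 1) (b * z₁ / a + 1)
  have hM : b * z₁ < a * M := by
    have hlt : b * z₁ / a < M := (lt_add_one _).trans_le (le_max_right _ _)
    rwa [div_lt_iff₀' ha] at hlt
  refine ⟨M, fun t ht => le_of_hasDerivAt_neg_of_eq (t₀ := 0)
    (hγ.hasDerivAt_snd 0).continuousAt.continuousWithinAt
    ((lt_add_one _).trans_le (le_max_left _ _)) (fun t _ => hγ.hasDerivAt_snd t)
    (fun t ht htM => mul_neg_of_pos_of_neg (by positivity) (sub_neg.2 ?_)) ht⟩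
  rw [htM]
  exact (mul_le_mul_of_nonneg_left (hγ.fst_mem_Icc ha hb ht.le).2 hb.le).trans_lt hM

theorem exists_isCompact (hγ : IsPhaseOrbit a b γ) (ha : 0 < a) (hb : 0 < b) :
    ∃ K ⊆ Set.Ioi (0 : ℝ) ×ˢ Set.Ici (0 : ℝ), IsCompact K ∧ ∀ t ≥ 0, γ t ∈ K := by
  obtain ⟨M, hM⟩ := hγ.exists_snd_le ha hb
  exact ⟨_ ×ˢ Set.Icc 0 M,
    Set.prod_mono (fun z hz => (exp_pos _).trans_le hz.1) Set.Icc_subset_Ici_self,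
    isCompact_Icc.prod isCompact_Icc,
    fun t ht => ⟨hγ.fst_mem_Icc ha hb ht, hγ.snd_nonneg t, hM t ht⟩⟩

theorem tendsto_fst_mul_snd (hγ : IsPhaseOrbit a b γ) (ha : 0 < a) (hb : 0 < b) :
    Tendsto (fun t => (γ t).1 * (γ t).2) atTop (𝓝 1) := by
  obtain ⟨K, hKpos, hK, hmem⟩ := hγ.exists_isCompact ha hb
  obtain ⟨L, hL⟩ := hγ.exists_tendsto_lyapunov ha.le hb.le
  have hdiss : ContinuousOn (dissipation a b) K := (continuousOn_dissipation a b).mono hKpos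
  have hzero : Tendsto (fun t => dissipation a b (γ t)) atTop (𝓝 0) :=
    tendsto_deriv_zero_along_integralCurve (hγ.isIntegralCurve.isIntegralCurveOn (Set.Ici 0)) hK
      (continuous_phaseField a b).continuousOn hmem hdiss
      (fun t _ => hγ.hasDerivAt_lyapunov t) hL
  exact tendsto_of_tendsto_of_isCompact (g := fun x => x.1 * x.2) hK
    ((eventually_ge_atTop 0).mono hmem) hdiss hzero (by fun_prop) fun x hx =>
      mul_eq_one_of_dissipation_eq_zero (by positivity) (hKpos hx).1 (hKpos hx).2

theorem tendsto_deriv_fst_mul_snd (hγ : IsPhaseOrbit a b γ) (ha : 0 < a) (hb : 0 < b) :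
    Tendsto (fun t => (phaseField a b (γ t)).1 * (γ t).2 + (γ t).1 * (phaseField a b (γ t)).2)
      atTop (𝓝 0) := by
  obtain ⟨K, -, hK, hmem⟩ := hγ.exists_isCompact ha hb
  have := continuous_phaseField a b
  exact tendsto_deriv_zero_along_integralCurve (f := fun t => (γ t).1 * (γ t).2)
    (Φ := fun x => (phaseField a b x).1 * x.2 + x.1 * (phaseField a b x).2)
    (hγ.isIntegralCurve.isIntegralCurveOn (Set.Ici 0)) hK this.continuousOn hmem
    (by fun_prop) (fun t _ => (hγ.hasDerivAt_fst t).mul (hγ.hasDerivAt_snd t))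
    (hγ.tendsto_fst_mul_snd ha hb)

end IsPhaseOrbit

theorem eq_sqrt_of_mul_eq_one {a b : ℝ} (ha : 0 < a) (hb : 0 < b) {x : ℝ × ℝ} (hx₁ : 0 < x.1)
    (hmul : x.1 * x.2 = 1)
    (hderiv : (phaseField a b x).1 * x.2 + x.1 * (phaseField a b x).2 = 0) :
    x = (√(a / b), √(b / a)) := by
  have hx₂ : 0 < x.2 := pos_of_mul_pos_right (hmul ▸ one_pos) hx₁.le
  have hfst : (phaseField a b x).1 = 0 := by simp only [phaseField]; linear_combination -x.1 * hmul
  have hbal : b * x.1 - a * x.2 = 0 := by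
    rw [hfst, zero_mul, zero_add, phaseField] at hderiv
    have : x.1 * (1 + x.2 ^ 2) ≠ 0 := by positivity
    exact (mul_eq_zero.1 ((mul_assoc _ _ _).trans hderiv)).resolve_left this
  have hsq₁ : a / b = x.1 ^ 2 := by
    rw [div_eq_iff hb.ne']; linear_combination (-x.1) * hbal - a * hmul
  have hsq₂ : b / a = x.2 ^ 2 := by
    rw [div_eq_iff ha.ne']; linear_combination x.2 * hbal - b * hmul
  rw [hsq₁, hsq₂, sqrt_sq hx₁.le, sqrt_sq hx₂.le]

namespace IsPhaseOrbit

variable {a b : ℝ} {γ : ℝ → ℝ × ℝ}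

theorem tendsto (hγ : IsPhaseOrbit a b γ) (ha : 0 < a) (hb : 0 < b) :
    Tendsto γ atTop (𝓝 (√(a / b), √(b / a))) := by
  obtain ⟨K, hKpos, hK, hmem⟩ := hγ.exists_isCompact ha hb
  have := continuous_phaseField a b
  exact tendsto_of_tendsto_of_isCompact (g := id) hK ((eventually_ge_atTop 0).mono hmem)
    (f := fun x => (x.1 * x.2, (phaseField a b x).1 * x.2 + x.1 * (phaseField a b x).2))
    (by fun_prop) ((hγ.tendsto_fst_mul_snd ha hb).prodMk_nhds (hγ.tendsto_deriv_fst_mul_snd ha hb))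
    continuousOn_id fun x hx heq =>
      eq_sqrt_of_mul_eq_one ha hb (hKpos hx).1 (congrArg Prod.fst heq) (congrArg Prod.snd heq)

/-- For `γ t = (r / v, v')` with `t = log r`, the quotient is the derivative of `log |v - l r|` with
respect to `t`. -/
theorem hasDerivAt_riccati (hγ : IsPhaseOrbit a b γ) {l t : ℝ} (hl : a * l ^ 2 = b)
    (ht : (γ t).1 * l ≠ 1) :
    HasDerivAt (fun t => (γ t).1 * ((γ t).2 - l) / (1 - (γ t).1 * l))
      (-(((γ t).1 * ((γ t).2 - l) / (1 - (γ t).1 * l)) ^ 2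
        + (a * (1 + (γ t).2 ^ 2) - 1) * ((γ t).1 * ((γ t).2 - l) / (1 - (γ t).1 * l))
        + (1 + (γ t).2 ^ 2) * (a * l * (γ t).1))) t := by
  have hne : 1 - (γ t).1 * l ≠ 0 := sub_ne_zero.2 ht.symm
  have hz := hγ.hasDerivAt_fst t
  refine ((hz.mul ((hγ.hasDerivAt_snd t).sub_const l)).div ((hz.mul_const l).const_sub 1)
    hne).congr_deriv ?_
  simp only [Pi.mul_apply, ← hl]
  field_simp
  ring

theorem frequently_fst_mul_eq_one (hγ : IsPhaseOrbit a b γ) (ha : 0 < a) (hb : 0 < b)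
    (hdisc : (a + b - 1) ^ 2 < 4 * (a + b)) : ∃ᶠ t in atTop, (γ t).1 * √(b / a) = 1 := by
  intro hnever
  have hl : a * √(b / a) ^ 2 = b := by rw [sq_sqrt (by positivity)]; field_simp
  have hl₁ : √(b / a) * √(a / b) = 1 := by
    rw [← sqrt_mul (by positivity), div_mul_div_cancel₀ ha.ne', div_self hb.ne', sqrt_one]
  have hz := (hγ.tendsto ha hb).fst_nhds
  have hs := ((hγ.tendsto ha hb).snd_nhds.pow 2).const_add 1
  refine not_eventually_hasDerivAt_riccati (c := fun t => a * (1 + (γ t).2 ^ 2) - 1)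
    (β := fun t => (1 + (γ t).2 ^ 2) * (a * √(b / a) * (γ t).1)) (c₀ := a + b - 1) (β₀ := a + b)
    ?_ ?_ hdisc (hnever.mono fun t ht => hγ.hasDerivAt_riccati hl ht)
  · convert (hs.const_mul a).sub_const 1 using 2
    linear_combination -hl
  · convert hs.mul (hz.const_mul (a * √(b / a))) using 2
    linear_combination -a * (1 + √(b / a) ^ 2) * hl₁ - hl

end IsPhaseOrbit

/-! ### The wiggly companion -/

theorem contDiffOn_two_of_hasDerivAt {f f' f'' : ℝ → ℝ} {s : Set ℝ} (hs : IsOpen s)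
    (hf : ∀ x ∈ s, HasDerivAt f (f' x) x) (hf' : ∀ x ∈ s, HasDerivAt f' (f'' x) x)
    (hf'' : ContinuousOn f'' s) : ContDiffOn ℝ 2 f s := by
  have hone : ContDiffOn ℝ 1 f' s := by
    rw [← zero_add 1, contDiffOn_succ_iff_deriv_of_isOpen hs, contDiffOn_zero]
    exact ⟨fun x hx => (hf' x hx).differentiableAt.differentiableWithinAt, by simp,
      hf''.congr fun x hx => (hf' x hx).deriv⟩
  rw [← one_add_one_eq_two, contDiffOn_succ_iff_deriv_of_isOpen hs]
  exact ⟨fun x hx => (hf x hx).differentiableAt.differentiableWithinAt, by simp,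
    hone.congr fun x hx => (hf x hx).deriv⟩

namespace IsProfile

variable {a b : ℝ} {v s : ℝ → ℝ}

theorem contDiffOn (h : IsProfile a b v s) : ContDiffOn ℝ 2 v (Set.Ioi 0) := by
  refine contDiffOn_two_of_hasDerivAt isOpen_Ioi h.hasDerivAt h.hasDerivAt_slope ?_
  have hv := h.continuousOn.mono Set.Ioi_subset_Ici_self
  have hs := h.continuousOn_slope.mono Set.Ioi_subset_Ici_self
  have hv0 : ∀ r ∈ Set.Ioi (0 : ℝ), v r ≠ 0 := fun r hr => (h.pos r (le_of_lt hr)).ne'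
  have hr0 : ∀ r ∈ Set.Ioi (0 : ℝ), r ≠ 0 := fun r hr => ne_of_gt hr
  fun_prop (disch := assumption)

theorem minimalSurface_eq (h : IsProfile a b v s) {r : ℝ} (hr : 0 < r) :
    deriv s r / (1 + s r ^ 2) + a / r * s r - b / v r = 0 := by
  rw [(h.hasDerivAt_slope r hr).deriv, mul_div_cancel_left₀ _ (by positivity)]
  ring

theorem isPhaseOrbit (h : IsProfile a b v s) :
    IsPhaseOrbit a b fun t => (exp t / v (exp t), s (exp t)) where
  isIntegralCurve t := by
    have hv : v (exp t) ≠ 0 := (h.pos _ (exp_pos t).le).ne'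
    have hexp := hasDerivAt_exp t
    refine ((hexp.div ((h.hasDerivAt _ (exp_pos t)).comp t hexp) hv).prodMk
      ((h.hasDerivAt_slope _ (exp_pos t)).comp t hexp)).congr_deriv ?_
    simp only [phaseField, Function.comp_apply]
    congr 1 <;> field_simp
  fst_pos t := div_pos (exp_pos t) (h.pos _ (exp_pos t).le)
  snd_nonneg t := h.slope_nonneg _ (exp_pos t).le

theorem tendsto_inv_ratio_prod_slope (h : IsProfile a b v s) (ha : 0 < a) (hb : 0 < b) :
    Tendsto (fun r => (r / v r, s r)) atTop (𝓝 (√(a / b), √(b / a))) := by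
  refine ((h.isPhaseOrbit.tendsto ha hb).comp tendsto_log_atTop).congr' ?_
  filter_upwards [eventually_gt_atTop 0] with r hr
  simp only [Function.comp_apply, exp_log hr]

theorem tendsto_ratio (h : IsProfile a b v s) (ha : 0 < a) (hb : 0 < b) :
    Tendsto (fun r => v r / r) atTop (𝓝 √(b / a)) := by
  have hne : √(a / b) ≠ 0 := by positivity
  simpa only [inv_div, ← sqrt_inv] using (h.tendsto_inv_ratio_prod_slope ha hb).fst_nhds.inv₀ hne

theorem tendsto_slope (h : IsProfile a b v s) (ha : 0 < a) (hb : 0 < b) :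
    Tendsto s atTop (𝓝 √(b / a)) :=
  (h.tendsto_inv_ratio_prod_slope ha hb).snd_nhds

theorem infinite_crossings (h : IsProfile a b v s) (ha : 0 < a) (hb : 0 < b)
    (hdisc : (a + b - 1) ^ 2 < 4 * (a + b)) :
    {r : ℝ | 0 < r ∧ v r = √(b / a) * r}.Infinite := by
  refine Set.infinite_of_forall_exists_gt fun R => ?_
  obtain ⟨t, hcross, hR⟩ := ((h.isPhaseOrbit.frequently_fst_mul_eq_one ha hb hdisc).and_eventually
    (tendsto_exp_atTop.eventually_gt_atTop R)).exists
  refine ⟨exp t, ⟨exp_pos t, ?_⟩, hR⟩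
  rw [div_mul_eq_mul_div, div_eq_one_iff_eq (h.pos _ (exp_pos t).le).ne'] at hcross
  rw [← hcross, mul_comm]

end IsProfile

theorem wiggly_companion_exists_general (p q : ℝ) (hp : 1 < p) (hq : 1 < q)
    (hpq : (p + q - 3) ^ 2 < 4 * (p + q - 2)) (lam : ℝ) (hlam : lam = √((q - 1) / (p - 1))) :
    ∃ v v' : ℝ → ℝ,
      (∀ r ≥ (0 : ℝ), 0 < v r) ∧
      ContinuousOn v (Set.Ici 0) ∧
      ContDiffOn ℝ 2 v (Set.Ioi 0) ∧
      v 0 = 1 ∧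
      ContinuousOn v' (Set.Ici 0) ∧
      v' 0 = 0 ∧
      (∀ r > (0 : ℝ), HasDerivAt v (v' r) r) ∧
      (∀ r > (0 : ℝ),
          deriv v' r / (1 + (v' r) ^ 2) + ((p - 1) / r) * v' r - (q - 1) / v r = 0) ∧
      Tendsto (fun r => v r / r) atTop (𝓝 lam) ∧
      Tendsto v' atTop (𝓝 lam) ∧
      {r : ℝ | 0 < r ∧ v r = lam * r}.Infinite := by
  have ha : 0 < p - 1 := sub_pos.2 hp
  have hb : 0 < q - 1 := sub_pos.2 hq
  obtain ⟨v, s, h⟩ := exists_isProfile ha hb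
  rw [hlam]
  exact ⟨v, s, h.pos, h.continuousOn, h.contDiffOn, h.at_zero, h.continuousOn_slope,
    h.slope_at_zero, h.hasDerivAt, fun r hr => h.minimalSurface_eq hr, h.tendsto_ratio ha hb,
    h.tendsto_slope ha hb, h.infinite_crossings ha hb (by linarith)⟩

/-- The 'wiggly companion': for `4 ≤ p + q ≤ 7` there is a smooth rotationally symmetric
minimal surface profile `v` with `v(0) = 1`, `v′(0) = 0`, solving the minimal surface ODE,
asymptotic to the cone slope `λ_s = √((q−1)/(p−1))` at infinity, and crossing the
line `u = λ_s r` infinitely many times. -/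
theorem wiggly_companion_exists (p q : ℕ) (hp : 2 ≤ p) (hq : 2 ≤ q)
    (hn4 : 4 ≤ p + q) (hn7 : p + q ≤ 7)
    (lam : ℝ) (hlam : lam = Real.sqrt (((q : ℝ) - 1) / ((p : ℝ) - 1))) :
    ∃ v v' : ℝ → ℝ,
      (∀ r ≥ (0 : ℝ), 0 < v r) ∧
      ContinuousOn v (Set.Ici 0) ∧
      ContDiffOn ℝ 2 v (Set.Ioi 0) ∧
      v 0 = 1 ∧
      ContinuousOn v' (Set.Ici 0) ∧
      v' 0 = 0 ∧
      (∀ r > (0 : ℝ), HasDerivAt v (v' r) r) ∧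
      (∀ r > (0 : ℝ),
          deriv v' r / (1 + (v' r) ^ 2)
            + (((p : ℝ) - 1) / r) * v' r - ((q : ℝ) - 1) / v r = 0) ∧
      Tendsto (fun r => v r / r) atTop (nhds lam) ∧
      Tendsto v' atTop (nhds lam) ∧
      {r : ℝ | 0 < r ∧ v r = lam * r}.Infinite := by
  have hp' : (2 : ℝ) ≤ p := mod_cast hp
  have hq' : (2 : ℝ) ≤ q := mod_cast hq
  have hpq : (p : ℝ) + q ≤ 7 := mod_cast hn7
  exact wiggly_companion_exists_general p q (by linarith) (by linarith) (by nlinarith) lam hlam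
end

section
/- Let p, q ≥ 2 be integers. For every a > 0 there exist a function u_a : [0, ∞) → (0, ∞), continuous on [0, ∞) and C² on (0, ∞), and a real number λ(a) ∈ (0, ∞), such that: u_a(0) = a; u_a′ extends continuously to 0 with u_a′(0) = 0; u_a solves the self-expander ODE u″/(1+u′²) + ((p−1)/r + r/2)·u′ − u/2 − (q−1)/u = 0 on (0, ∞); and u_a(r)/r → λ(a) and u_a′(r) → λ(a) as r → ∞. -/
open Real Filter

/-! With `n = p - 1`, `Q = q - 1`, `u' = tan θ` and `w = sin θ`, the equation becomes
`w' + (n / r + r / 2) w = cos θ * (u / 2 + Q / u)`. The singular linear part is inverted by the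
integrating factor `rⁿ exp (r² / 4)`. If `θ` is clamped to `0 ≤ tan θ ≤ m r`, where
`n m = a / 2 + Q / a`, the right-hand side becomes a locally Lipschitz functional of the past of
`w`, and a weighted contraction gives a global solution. The barrier `tan θ = m r` is a strict
supersolution, so the clamp is never active.

At a positive maximum or a negative minimum of `φ = u - r u'` that is large compared with
`a + 2 Q / a`, the equation for `φ'` has the wrong sign; hence `φ` is bounded,
`(u / r)' = -φ / r²` is integrable, and `u / r` and `u'` have a common limit. This limit is positive
because `u'` cannot drop below a small `δ > 0` after `r = 1`: until it does, `u` grows at least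
linearly with slope `δ`, which makes `u'' > 0` wherever `u' = δ`. -/

namespace SelfExpander

open Set MeasureTheory
open scoped NNReal Topology BoundedContinuousFunction

/-! ### Singular linear equations with a causal nonlinearity -/

section Volterra

variable {E : Type*} [NormedAddCommGroup E] [NormedSpace ℝ E]

theorem exists_eqOn_of_weighted_contraction [CompleteSpace E] {ω : ℝ → ℝ} (hω : Continuous ω)
    (hω_pos : ∀ r, 0 < ω r) {c : ℝ≥0} (hc : c < 1) {C : ℝ} {T : (ℝ → E) → ℝ → E}
    (hT_cont : ∀ x, Continuous x → ContinuousOn (T x) (Ici 0))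
    (hT_zero : ∀ r ≥ 0, ‖T 0 r‖ ≤ C * ω r)
    (hT : ∀ x y D, Continuous x → Continuous y → (∀ s ≥ 0, ‖x s - y s‖ ≤ D * ω s) →
      ∀ r ≥ 0, ‖T x r - T y r‖ ≤ c * D * ω r) :
    ∃ x, Continuous x ∧ EqOn (T x) x (Ici 0) := by
  have hmax (r : ℝ) : 0 ≤ max r 0 := le_max_right r 0
  have hmul (ξ : ℝ →ᵇ E) : Continuous (ω • ⇑ξ) := hω.smul ξ.continuous
  have norm_inv_smul_le {r B : ℝ} {z : E} (hz : ‖z‖ ≤ B * ω r) : ‖(ω r)⁻¹ • z‖ ≤ B := by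
    rw [norm_smul, norm_inv, Real.norm_of_nonneg (hω_pos r).le, inv_mul_le_iff₀ (hω_pos r)]
    rwa [mul_comm] at hz
  let f (ξ : ℝ →ᵇ E) (r : ℝ) : E := (ω (max r 0))⁻¹ • T (ω • ⇑ξ) (max r 0)
  have hf_cont (ξ : ℝ →ᵇ E) : Continuous (f ξ) := by
    have hr : Continuous fun r : ℝ => max r 0 := by fun_prop
    exact ((hω.comp hr).inv₀ fun r => (hω_pos _).ne').smul
      ((hT_cont _ (hmul ξ)).comp_continuous hr hmax)
  have hf_sub (ξ η : ℝ →ᵇ E) (r : ℝ) : ‖f ξ r - f η r‖ ≤ c * dist ξ η := by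
    rw [← smul_sub]
    refine norm_inv_smul_le (hT _ _ _ (hmul ξ) (hmul η) (fun s _ => ?_) _ (hmax r))
    rw [Pi.smul_apply', Pi.smul_apply', ← smul_sub, norm_smul, Real.norm_of_nonneg (hω_pos s).le,
      mul_comm, ← dist_eq_norm]
    exact mul_le_mul_of_nonneg_right (BoundedContinuousFunction.dist_coe_le_dist s) (hω_pos s).le
  have hf_zero (r : ℝ) : ‖f 0 r‖ ≤ C := by
    refine norm_inv_smul_le ?_
    rw [BoundedContinuousFunction.coe_zero, smul_zero]
    exact hT_zero _ (hmax r)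
  let F (ξ : ℝ →ᵇ E) : ℝ →ᵇ E :=
    .ofNormedAddCommGroup (f ξ) (hf_cont ξ) (c * dist ξ 0 + C) fun r =>
      (norm_le_norm_sub_add (f ξ r) (f 0 r)).trans (add_le_add (hf_sub ξ 0 r) (hf_zero r))
  have hF : ContractingWith c F := by
    refine ⟨hc, LipschitzWith.of_dist_le_mul fun ξ η => ?_⟩
    refine (BoundedContinuousFunction.dist_le (by positivity)).2 fun r => ?_
    rw [dist_eq_norm]
    exact hf_sub ξ η r
  have : Nonempty (ℝ →ᵇ E) := ⟨0⟩
  let ξ := hF.fixedPoint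
  refine ⟨ω • ⇑ξ, hmul ξ, fun r hr => ?_⟩
  have hξ : f ξ r = ξ r := DFunLike.congr_fun hF.fixedPoint_isFixedPt r
  simp only [f, max_eq_left (mem_Ici.1 hr)] at hξ
  rw [Pi.smul_apply', ← hξ, smul_inv_smul₀ (hω_pos r).ne']

/-- `Φ` is an integrating factor on `(0, ∞)` for the linear operator `x ↦ x' + k x`. The
coefficient `k` may be singular at `0`; monotonicity of `Φ` is what keeps `weightedAverage`
bounded there. -/
structure IsIntegratingFactor (Φ k : ℝ → ℝ) : Prop where
  continuous : Continuous Φ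
  monotoneOn : MonotoneOn Φ (Ici 0)
  pos : ∀ r > 0, 0 < Φ r
  hasDerivAt : ∀ r > 0, HasDerivAt Φ (k r * Φ r) r

/-- `(1 / Φ r) ∫₀ʳ Φ g`, the solution of `x' + k x = g` vanishing at `0` when `Φ` is an
integrating factor for `k`. At a zero of `Φ` the convention `0⁻¹ = 0` gives the value `0`. -/
noncomputable def weightedAverage (Φ : ℝ → ℝ) (g : ℝ → E) (r : ℝ) : E :=
  (Φ r)⁻¹ • ∫ s in (0 : ℝ)..r, Φ s • g s

@[simp]
theorem weightedAverage_zero (Φ : ℝ → ℝ) (g : ℝ → E) : weightedAverage Φ g 0 = 0 := by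
  simp [weightedAverage]

namespace IsIntegratingFactor

variable {Φ k : ℝ → ℝ}

theorem nonneg (hΦ : IsIntegratingFactor Φ k) {r : ℝ} (hr : 0 ≤ r) : 0 ≤ Φ r := by
  refine le_on_closure (s := Ioi 0) (fun s hs => (hΦ.pos s hs).le) continuousOn_const
    hΦ.continuous.continuousOn ?_
  rwa [closure_Ioi]

theorem norm_weightedAverage_le (hΦ : IsIntegratingFactor Φ k) {g : ℝ → E} (hg : Continuous g)
    {r : ℝ} (hr : 0 ≤ r) : ‖weightedAverage Φ g r‖ ≤ ∫ s in (0 : ℝ)..r, ‖g s‖ := by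
  rcases hr.eq_or_lt with rfl | hr'
  · simp
  have hΦr := hΦ.pos r hr'
  rw [weightedAverage, norm_smul, norm_inv, Real.norm_of_nonneg hΦr.le, inv_mul_le_iff₀ hΦr,
    ← intervalIntegral.integral_const_mul]
  refine intervalIntegral.norm_integral_le_of_norm_le hr (ae_of_all _ fun s hs => ?_)
    ((hg.norm.const_mul _).intervalIntegrable _ _)
  rw [norm_smul, Real.norm_of_nonneg (hΦ.nonneg hs.1.le)]
  exact mul_le_mul_of_nonneg_right (hΦ.monotoneOn hs.1.le hr hs.2) (norm_nonneg _)

theorem weightedAverage_sub (hΦ : IsIntegratingFactor Φ k) {g h : ℝ → E} (hg : Continuous g)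
    (hh : Continuous h) (r : ℝ) :
    weightedAverage Φ (g - h) r = weightedAverage Φ g r - weightedAverage Φ h r := by
  simpa only [weightedAverage, Pi.sub_apply, Pi.smul_apply', smul_sub] using
    congrArg ((Φ r)⁻¹ • ·) (intervalIntegral.integral_sub
      ((hΦ.continuous.smul hg).intervalIntegrable 0 r)
      ((hΦ.continuous.smul hh).intervalIntegrable 0 r))

theorem weightedAverage_nonneg (hΦ : IsIntegratingFactor Φ k) {g : ℝ → ℝ}
    (hg : ∀ s ≥ 0, 0 ≤ g s) {r : ℝ} (hr : 0 ≤ r) : 0 ≤ weightedAverage Φ g r :=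
  mul_nonneg (inv_nonneg.2 (hΦ.nonneg hr)) <| intervalIntegral.integral_nonneg hr fun s hs =>
    mul_nonneg (hΦ.nonneg hs.1) (hg s hs.1)

variable [CompleteSpace E]

theorem hasDerivAt_weightedAverage (hΦ : IsIntegratingFactor Φ k) {g : ℝ → E} (hg : Continuous g)
    {r : ℝ} (hr : 0 < r) :
    HasDerivAt (weightedAverage Φ g) (g r - k r • weightedAverage Φ g r) r := by
  have hΦr := (hΦ.pos r hr).ne'
  have hint : HasDerivAt (fun r => ∫ s in (0 : ℝ)..r, Φ s • g s) (Φ r • g r) r :=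
    ((hΦ.continuous.smul hg).integral_hasStrictDerivAt 0 r).hasDerivAt
  refine (((hΦ.hasDerivAt r hr).inv hΦr).smul hint).congr_deriv ?_
  rw [Pi.inv_apply, inv_smul_smul₀ hΦr, weightedAverage, smul_smul, sub_eq_add_neg, ← neg_smul]
  congr 2
  field_simp

theorem hasDerivAt_of_eqOn_weightedAverage (hΦ : IsIntegratingFactor Φ k) {g x : ℝ → E}
    (hg : Continuous g) (hx : EqOn (weightedAverage Φ g) x (Ici 0)) {r : ℝ} (hr : 0 < r) :
    HasDerivAt x (g r - k r • x r) r := by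
  rw [← hx hr.le]
  refine (hΦ.hasDerivAt_weightedAverage hg hr).congr_of_eventuallyEq ?_
  filter_upwards [Ioi_mem_nhds hr] with s hs using (hx (mem_Ici.2 (mem_Ioi.1 hs).le)).symm

theorem continuousOn_weightedAverage (hΦ : IsIntegratingFactor Φ k) {g : ℝ → E}
    (hg : Continuous g) : ContinuousOn (weightedAverage Φ g) (Ici 0) := by
  intro r hr
  rcases (mem_Ici.1 hr).eq_or_lt with rfl | hr'
  · rw [ContinuousWithinAt, weightedAverage_zero]
    have hprim : Tendsto (fun r => ∫ s in (0 : ℝ)..r, ‖g s‖) (𝓝[≥] 0) (𝓝 0) := by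
      have hcont : Continuous fun r => ∫ s in (0 : ℝ)..r, ‖g s‖ :=
        intervalIntegral.continuous_primitive (fun _ _ => hg.norm.intervalIntegrable _ _) 0
      simpa using (hcont.tendsto 0).mono_left nhdsWithin_le_nhds
    refine squeeze_zero_norm' ?_ hprim
    filter_upwards [self_mem_nhdsWithin] with s hs using hΦ.norm_weightedAverage_le hg hs
  · exact (hΦ.hasDerivAt_weightedAverage hg hr').continuousAt.continuousWithinAt

end IsIntegratingFactor

theorem integral_mul_exp_integral {ℓ : ℝ → ℝ} (hℓ : Continuous ℓ) (r : ℝ) :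
    ∫ s in (0 : ℝ)..r, ℓ s * exp (∫ t in (0 : ℝ)..s, ℓ t) = exp (∫ t in (0 : ℝ)..r, ℓ t) - 1 := by
  have hderiv (s : ℝ) : HasDerivAt (fun s => exp (∫ t in (0 : ℝ)..s, ℓ t))
      (ℓ s * exp (∫ t in (0 : ℝ)..s, ℓ t)) s := by
    rw [mul_comm]
    exact (hℓ.integral_hasStrictDerivAt 0 s).hasDerivAt.exp
  have hcont : Continuous fun s => ∫ t in (0 : ℝ)..s, ℓ t :=
    intervalIntegral.continuous_primitive (fun _ _ => hℓ.intervalIntegrable _ _) 0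
  rw [intervalIntegral.integral_eq_sub_of_hasDerivAt (fun s _ => hderiv s)
    ((hℓ.mul (continuous_exp.comp hcont)).intervalIntegrable _ _)]
  simp

theorem monotoneOn_integral_of_nonneg {ℓ : ℝ → ℝ} (hℓ : Continuous ℓ)
    (hℓ_nonneg : ∀ r ≥ 0, 0 ≤ ℓ r) : MonotoneOn (fun r => ∫ s in (0 : ℝ)..r, ℓ s) (Ici 0) := by
  intro s hs r _ hsr
  refine intervalIntegral.integral_mono_interval le_rfl hs hsr ?_ (hℓ.intervalIntegrable _ _)
  filter_upwards [ae_restrict_mem measurableSet_Ioc] with t ht using hℓ_nonneg t ht.1.le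

namespace IsIntegratingFactor

variable {Φ k : ℝ → ℝ}

theorem norm_weightedAverage_le_exp (hΦ : IsIntegratingFactor Φ k) {g : ℝ → E}
    (hg : Continuous g) {ℓ : ℝ → ℝ} (hℓ : Continuous ℓ) {D : ℝ} (hD : 0 ≤ D)
    (hgℓ : ∀ s ≥ 0, ‖g s‖ ≤ D * (ℓ s * exp (∫ t in (0 : ℝ)..s, ℓ t))) {r : ℝ} (hr : 0 ≤ r) :
    ‖weightedAverage Φ g r‖ ≤ D * exp (∫ t in (0 : ℝ)..r, ℓ t) := by
  have hprim : Continuous fun s => ∫ t in (0 : ℝ)..s, ℓ t :=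
    intervalIntegral.continuous_primitive (fun _ _ => hℓ.intervalIntegrable _ _) 0
  calc ‖weightedAverage Φ g r‖
      ≤ ∫ s in (0 : ℝ)..r, ‖g s‖ := hΦ.norm_weightedAverage_le hg hr
    _ ≤ ∫ s in (0 : ℝ)..r, D * (ℓ s * exp (∫ t in (0 : ℝ)..s, ℓ t)) :=
      intervalIntegral.integral_mono_on hr (hg.norm.intervalIntegrable _ _)
        (((hℓ.mul (continuous_exp.comp hprim)).const_mul D).intervalIntegrable _ _)
        fun s hs => hgℓ s hs.1
    _ = D * (exp (∫ t in (0 : ℝ)..r, ℓ t) - 1) := by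
      rw [intervalIntegral.integral_const_mul, integral_mul_exp_integral hℓ]
    _ ≤ D * exp (∫ t in (0 : ℝ)..r, ℓ t) := by linarith

/- Bielecki's method: the weight `exp ∫ (2 L + ‖G 0‖)` halves the Lipschitz constant of
`x ↦ weightedAverage Φ (G x)` and makes the image of `0` bounded. -/
theorem exists_eqOn_weightedAverage [CompleteSpace E] (hΦ : IsIntegratingFactor Φ k)
    {G : (ℝ → E) → ℝ → E} (hG : ∀ x, Continuous x → Continuous (G x))
    {L : ℝ → ℝ} (hL : Continuous L)
    (hG_lip : ∀ x y, Continuous x → Continuous y → ∀ r ≥ 0, ∀ D,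
      (∀ s ∈ Icc 0 r, ‖x s - y s‖ ≤ D) → ‖G x r - G y r‖ ≤ L r * D) :
    ∃ x, Continuous x ∧ EqOn (weightedAverage Φ (G x)) x (Ici 0) := by
  have hG_zero : Continuous (G 0) := hG 0 continuous_zero
  have hL_nonneg (r : ℝ) (hr : 0 ≤ r) : 0 ≤ L r := by
    simpa using hG_lip 0 0 continuous_zero continuous_zero r hr 1 (by simp)
  let ℓ (s : ℝ) : ℝ := 2 * L s + ‖G 0 s‖
  have hℓ : Continuous ℓ := (hL.const_mul 2).add hG_zero.norm
  have two_mul_le (s : ℝ) : 2 * L s ≤ ℓ s := le_add_of_nonneg_right (norm_nonneg _)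
  have norm_le (s : ℝ) (hs : 0 ≤ s) : ‖G 0 s‖ ≤ ℓ s :=
    le_add_of_nonneg_left (mul_nonneg two_pos.le (hL_nonneg s hs))
  let K (r : ℝ) : ℝ := ∫ s in (0 : ℝ)..r, ℓ s
  have hK : Continuous K :=
    intervalIntegral.continuous_primitive (fun _ _ => hℓ.intervalIntegrable _ _) 0
  have hK_mono : MonotoneOn K (Ici 0) :=
    monotoneOn_integral_of_nonneg hℓ fun s hs => (norm_nonneg _).trans (norm_le s hs)
  have one_le_exp (s : ℝ) (hs : 0 ≤ s) : 1 ≤ exp (K s) := by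
    rw [Real.one_le_exp_iff]
    simpa [K] using hK_mono self_mem_Ici hs hs
  refine exists_eqOn_of_weighted_contraction (ω := fun r => exp (K r)) (c := 1 / 2) (C := 1)
    (continuous_exp.comp hK) (fun r => exp_pos _) (by norm_num)
    (fun x hx => hΦ.continuousOn_weightedAverage (hG x hx)) (fun r hr => ?_)
    (fun x y D hx hy hxy r hr => ?_)
  · refine hΦ.norm_weightedAverage_le_exp hG_zero hℓ one_pos.le (fun s hs => ?_) hr
    rw [one_mul]
    exact (norm_le s hs).trans
      (le_mul_of_one_le_right ((norm_nonneg _).trans (norm_le s hs)) (one_le_exp s hs))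
  · have hD : 0 ≤ D :=
      nonneg_of_mul_nonneg_left ((norm_nonneg _).trans (hxy 0 le_rfl)) (exp_pos _)
    rw [← hΦ.weightedAverage_sub (hG x hx) (hG y hy),
      show ((1 / 2 : ℝ≥0) : ℝ) * D = D / 2 by push_cast; ring]
    refine hΦ.norm_weightedAverage_le_exp ((hG x hx).sub (hG y hy)) hℓ (by positivity)
      (fun s hs => ?_) hr
    calc ‖G x s - G y s‖
        ≤ L s * (D * exp (K s)) := hG_lip x y hx hy s hs _ fun t ht =>
          (hxy t ht.1).trans (by gcongr; exact hK_mono ht.1 hs ht.2)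
      _ = D / 2 * (2 * L s * exp (K s)) := by ring
      _ ≤ D / 2 * (ℓ s * exp (K s)) := by gcongr; exact two_mul_le s

end IsIntegratingFactor

end Volterra

/-! ### First-contact comparison -/

theorem neg_of_deriv_neg_at_first_zero {f f' : ℝ → ℝ} {r₀ : ℝ} (hf : ContinuousOn f (Ici r₀))
    (hf' : ∀ r > r₀, HasDerivAt f (f' r) r) (h₀ : f r₀ < 0)
    (hcontact : ∀ r > r₀, f r = 0 → (∀ s ∈ Ico r₀ r, f s < 0) → f' r < 0) {r : ℝ} (hr : r₀ ≤ r) :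
    f r < 0 := by
  by_contra! hfr
  have hclosed : IsClosed (Icc r₀ r ∩ f ⁻¹' Ici 0) :=
    (hf.mono Icc_subset_Ici_self).preimage_isClosed_of_isClosed isClosed_Icc isClosed_Ici
  obtain ⟨t, ⟨ht, hft⟩, ht_least⟩ :=
    (isCompact_Icc.of_isClosed_subset hclosed inter_subset_left).exists_isLeast
      ⟨r, right_mem_Icc.2 hr, hfr⟩
  rw [mem_preimage, mem_Ici] at hft
  have hr₀t : r₀ < t := ht.1.lt_of_ne (by rintro rfl; linarith)
  have hbefore (s : ℝ) (hs : s ∈ Ico r₀ t) : f s < 0 := by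
    by_contra! hfs
    exact hs.2.not_ge (ht_least ⟨⟨hs.1, hs.2.le.trans ht.2⟩, hfs⟩)
  have hft_le : f t ≤ 0 := by
    have hleft : Tendsto f (𝓝[<] t) (𝓝 (f t)) :=
      (hf' t hr₀t).continuousAt.tendsto.mono_left nhdsWithin_le_nhds
    refine le_of_tendsto hleft ?_
    filter_upwards [Ioo_mem_nhdsLT hr₀t] with s hs using (hbefore s ⟨hs.1.le, hs.2⟩).le
  have hft_zero : f t = 0 := le_antisymm hft_le hft
  refine (hcontact t hr₀t hft_zero hbefore).not_ge ?_
  refine ge_of_tendsto ((hasDerivWithinAt_iff_tendsto_slope' self_notMem_Iio).1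
    (hf' t hr₀t).hasDerivWithinAt) ?_
  filter_upwards [Ioo_mem_nhdsLT hr₀t] with s hs
  rw [slope_def_field, hft_zero, sub_zero]
  exact div_nonneg_of_nonpos (hbefore s ⟨hs.1.le, hs.2⟩).le (by linarith [hs.2])

/-! ### Regularity and asymptotic slopes -/

theorem contDiffOn_two_of_hasDerivAt {𝕜 F : Type*} [NontriviallyNormedField 𝕜]
    [NormedAddCommGroup F] [NormedSpace 𝕜 F] {s : Set 𝕜} (hs : IsOpen s) {f f' f'' : 𝕜 → F}
    (hf : ∀ r ∈ s, HasDerivAt f (f' r) r) (hf' : ∀ r ∈ s, HasDerivAt f' (f'' r) r)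
    (hf'' : ContinuousOn f'' s) : ContDiffOn 𝕜 2 f s := by
  have contDiffOn_succ {n : ℕ} {g g' : 𝕜 → F} (hg : ∀ r ∈ s, HasDerivAt g (g' r) r)
      (hg' : ContDiffOn 𝕜 n g' s) : ContDiffOn 𝕜 (n + 1) g s :=
    (contDiffOn_succ_iff_deriv_of_isOpen hs).2
      ⟨fun r hr => (hg r hr).differentiableAt.differentiableWithinAt, by simp,
        hg'.congr fun r hr => (hg r hr).deriv⟩
  have hf'_one := contDiffOn_succ (n := 0) hf' (contDiffOn_zero.2 hf'')
  have hf_two := contDiffOn_succ (n := 1) hf (by simpa using hf'_one)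
  rwa [Nat.cast_one, one_add_one_eq_two] at hf_two

section ConicalAsymptotics

variable {u v : ℝ → ℝ} {C : ℝ}

theorem integrableOn_Ioi_deriv_div_of_abs_sub_mul_le (hu : ∀ r > 0, HasDerivAt u (v r) r)
    (hC : ∀ r > 0, |u r - r * v r| ≤ C) :
    IntegrableOn (deriv fun r => u r / r) (Ioi 1) := by
  refine ((integrableOn_Ioi_rpow_of_lt (by norm_num : (-2 : ℝ) < -1) one_pos).const_mul C).mono'
    (aestronglyMeasurable_deriv _ _) ?_
  filter_upwards [ae_restrict_mem measurableSet_Ioi] with r hr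
  have hr₀ : 0 < r := one_pos.trans hr
  have hderiv : deriv (fun r => u r / r) r = -(u r - r * v r) / r ^ 2 := by
    rw [((hu r hr₀).fun_div (hasDerivAt_id' r) hr₀.ne').deriv]
    ring
  rw [hderiv, norm_div, norm_neg, norm_pow, Real.norm_of_nonneg hr₀.le, Real.rpow_neg hr₀.le,
    div_eq_mul_inv, Real.rpow_two]
  gcongr
  exact hC r hr₀

theorem exists_tendsto_div_of_abs_sub_mul_le (hu : ∀ r > 0, HasDerivAt u (v r) r)
    (hC : ∀ r > 0, |u r - r * v r| ≤ C) :
    ∃ lam, Tendsto (fun r => u r / r) atTop (𝓝 lam) ∧ Tendsto v atTop (𝓝 lam) := by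
  have hdiv (r : ℝ) (hr : r ∈ Ioi (1 : ℝ)) :
      HasDerivAt (fun r => u r / r) (deriv (fun r => u r / r) r) r :=
    have hr₀ : 0 < r := one_pos.trans hr
    ((hu r hr₀).fun_div (hasDerivAt_id' r) hr₀.ne').differentiableAt.hasDerivAt
  have hlim := tendsto_limUnder_of_hasDerivAt_of_integrableOn_Ioi hdiv
    (integrableOn_Ioi_deriv_div_of_abs_sub_mul_le hu hC)
  have herror : Tendsto (fun r => (u r - r * v r) / r) atTop (𝓝 0) := by
    refine squeeze_zero_norm' ?_ (tendsto_const_nhds.div_atTop tendsto_id : Tendsto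
      (fun r : ℝ => C / r) atTop (𝓝 0))
    filter_upwards [eventually_gt_atTop 0] with r hr
    rw [norm_div, Real.norm_of_nonneg hr.le]
    exact div_le_div_of_nonneg_right (hC r hr) hr.le
  refine ⟨_, hlim, ?_⟩
  have hsub := hlim.sub herror
  rw [sub_zero] at hsub
  refine hsub.congr' ?_
  filter_upwards [eventually_gt_atTop 0] with r hr
  field_simp
  ring

end ConicalAsymptotics

/-! ### The tilt variable -/

section Tilt

theorem cos_arcsin_pos {s : ℝ} (hs : s ∈ Ioo (-1) 1) : 0 < cos (arcsin s) :=
  cos_pos_of_mem_Ioo ⟨neg_pi_div_two_lt_arcsin.2 hs.1, arcsin_lt_pi_div_two.2 hs.2⟩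

theorem hasDerivAt_cos_arcsin {s : ℝ} (hs : s ∈ Ioo (-1) 1) :
    HasDerivAt (fun s => cos (arcsin s)) (-tan (arcsin s)) s := by
  refine (hasDerivAt_arcsin hs.1.ne' hs.2.ne).cos.congr_deriv ?_
  rw [← cos_arcsin, mul_one_div, neg_div, ← tan_eq_sin_div_cos]

theorem hasDerivAt_tan_arcsin {s : ℝ} (hs : s ∈ Ioo (-1) 1) :
    HasDerivAt (fun s => tan (arcsin s)) (1 / cos (arcsin s) ^ 3) s := by
  refine ((hasDerivAt_tan (cos_arcsin_pos hs).ne').comp s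
    (hasDerivAt_arcsin hs.1.ne' hs.2.ne)).congr_deriv ?_
  rw [← cos_arcsin, div_mul_div_comm, one_mul, ← pow_succ]

theorem hasDerivAt_tan_arcsin_of_hasDerivAt {x : ℝ → ℝ} {r f k : ℝ} (hxr : x r ∈ Ioo (-1) 1)
    (hx : HasDerivAt x (cos (arcsin (x r)) * f - k * x r) r) :
    HasDerivAt (fun r => tan (arcsin (x r)))
      ((1 + tan (arcsin (x r)) ^ 2) * (f - k * tan (arcsin (x r)))) r := by
  have hcos := (cos_arcsin_pos hxr).ne'
  refine ((hasDerivAt_tan_arcsin hxr).comp r hx).congr_deriv ?_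
  have hsin : x r = tan (arcsin (x r)) * cos (arcsin (x r)) := by
    rw [tan_mul_cos hcos, sin_arcsin hxr.1.le hxr.2.le]
  rw [← inv_inv (1 + tan (arcsin (x r)) ^ 2), inv_one_add_tan_sq hcos]
  nth_rewrite 3 [hsin]
  field_simp

theorem sin_arctan_eq_mul_cos_arctan (t : ℝ) : sin (arctan t) = t * cos (arctan t) := by
  rw [← tan_mul_cos (cos_arctan_pos t).ne', tan_arctan]

variable {M s t : ℝ}

theorem Icc_zero_sin_arctan_subset_Ioo : Icc 0 (sin (arctan M)) ⊆ Ioo (-1) 1 := by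
  refine fun s hs => ⟨neg_one_lt_zero.trans_le hs.1, hs.2.trans_lt ?_⟩
  have hcos := cos_arctan_pos M
  nlinarith [sin_sq_add_cos_sq (arctan M), sq_nonneg (sin (arctan M) - 1)]

theorem arcsin_mem_Icc_arctan (hs : s ∈ Icc 0 (sin (arctan M))) :
    arcsin s ∈ Icc 0 (arctan M) := by
  refine ⟨arcsin_nonneg.2 hs.1, (monotone_arcsin hs.2).trans_eq ?_⟩
  exact arcsin_sin (neg_pi_div_two_lt_arctan M).le (arctan_lt_pi_div_two M).le

theorem tan_arcsin_mem_Icc (hs : s ∈ Icc 0 (sin (arctan M))) : tan (arcsin s) ∈ Icc 0 M := by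
  have hθ := arcsin_mem_Icc_arctan hs
  have hs' := Icc_zero_sin_arctan_subset_Ioo hs
  refine ⟨tan_nonneg_of_nonneg_of_le_pi_div_two hθ.1 (arcsin_le_pi_div_two s), ?_⟩
  rw [← tan_arctan M]
  exact strictMonoOn_tan.monotoneOn
    ⟨neg_pi_div_two_lt_arcsin.2 hs'.1, arcsin_lt_pi_div_two.2 hs'.2⟩
    ⟨neg_pi_div_two_lt_arctan M, arctan_lt_pi_div_two M⟩ hθ.2

theorem one_div_cos_arcsin_pow_three_le (hs : s ∈ Icc 0 (sin (arctan M))) :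
    1 / cos (arcsin s) ^ 3 ≤ (1 + M ^ 2) ^ 2 := by
  have hcos := cos_arcsin_pos (Icc_zero_sin_arctan_subset_Ioo hs)
  have htan := tan_arcsin_mem_Icc hs
  calc 1 / cos (arcsin s) ^ 3
      ≤ 1 / cos (arcsin s) ^ 4 :=
        one_div_le_one_div_of_le (by positivity)
          (pow_le_pow_of_le_one hcos.le (cos_le_one _) (by norm_num))
    _ = (1 + tan (arcsin s) ^ 2) ^ 2 := by
        rw [← inv_inv (1 + tan (arcsin s) ^ 2), inv_one_add_tan_sq hcos.ne']
        ring
    _ ≤ (1 + M ^ 2) ^ 2 := by gcongr; exacts [htan.1, htan.2]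

theorem abs_cos_arcsin_sub_le (hs : s ∈ Icc 0 (sin (arctan M)))
    (ht : t ∈ Icc 0 (sin (arctan M))) :
    |cos (arcsin s) - cos (arcsin t)| ≤ M * |s - t| :=
  (convex_Icc _ _).norm_image_sub_le_of_norm_hasDerivWithin_le
    (fun _ hz => (hasDerivAt_cos_arcsin (Icc_zero_sin_arctan_subset_Ioo hz)).hasDerivWithinAt)
    (fun _ hz => by
      rw [norm_neg, Real.norm_of_nonneg (tan_arcsin_mem_Icc hz).1]
      exact (tan_arcsin_mem_Icc hz).2) ht hs

theorem abs_tan_arcsin_sub_le (hs : s ∈ Icc 0 (sin (arctan M)))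
    (ht : t ∈ Icc 0 (sin (arctan M))) :
    |tan (arcsin s) - tan (arcsin t)| ≤ (1 + M ^ 2) ^ 2 * |s - t| :=
  (convex_Icc _ _).norm_image_sub_le_of_norm_hasDerivWithin_le
    (fun _ hz => (hasDerivAt_tan_arcsin (Icc_zero_sin_arctan_subset_Ioo hz)).hasDerivWithinAt)
    (fun _ hz => by
      have hcos := cos_arcsin_pos (Icc_zero_sin_arctan_subset_Ioo hz)
      rw [Real.norm_of_nonneg (by positivity)]
      exact one_div_cos_arcsin_pow_three_le hz) ht hs

end Tilt

/-! ### The truncated equation -/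

/-- The integrating factor `rⁿ exp (r² / 4)` of the coefficient `n / r + r / 2`. -/
noncomputable def radialWeight (n r : ℝ) : ℝ := r ^ n * exp (r ^ 2 / 4)

theorem isIntegratingFactor_radialWeight {n : ℝ} (hn : 0 ≤ n) :
    IsIntegratingFactor (radialWeight n) (fun r => n / r + r / 2) where
  continuous := by
    have := continuous_rpow_const hn
    unfold radialWeight
    fun_prop
  monotoneOn s (hs : 0 ≤ s) r _ hsr := by
    have := rpow_nonneg (hs.trans hsr) n
    unfold radialWeight
    gcongr
  pos r hr := mul_pos (rpow_pos_of_pos hr n) (exp_pos _)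
  hasDerivAt r hr := by
    refine ((hasDerivAt_rpow_const (.inl hr.ne')).mul
      ((hasDerivAt_pow 2 r).div_const 4).exp).congr_deriv ?_
    rw [rpow_sub_one hr.ne', radialWeight]
    push_cast
    ring

/-- The zeroth order term `y / 2 + Q / y` of the self-expander equation, where `Q = q - 1`. -/
noncomputable def verticalForce (Q y : ℝ) : ℝ := y / 2 + Q / y

section VerticalForce

variable {Q a y z : ℝ}

theorem verticalForce_pos (hQ : 0 ≤ Q) (hy : 0 < y) : 0 < verticalForce Q y := by
  unfold verticalForce
  positivity

theorem verticalForce_le (hQ : 0 ≤ Q) (ha : 0 < a) (hy : a ≤ y) :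
    verticalForce Q y ≤ y / 2 + Q / a := by
  unfold verticalForce
  gcongr

theorem abs_verticalForce_sub_le (hQ : 0 ≤ Q) (ha : 0 < a) (hy : a ≤ y) (hz : a ≤ z) :
    |verticalForce Q y - verticalForce Q z| ≤ (1 / 2 + Q / a ^ 2) * |y - z| := by
  have hy₀ := ha.trans_le hy
  have hz₀ := ha.trans_le hz
  have hfactor : verticalForce Q y - verticalForce Q z = (1 / 2 - Q / (y * z)) * (y - z) := by
    unfold verticalForce
    field_simp
    ring
  have hle : Q / (y * z) ≤ Q / a ^ 2 := by rw [sq]; gcongr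
  have hnonneg : 0 ≤ Q / (y * z) := by positivity
  rw [hfactor, abs_mul]
  gcongr
  rw [abs_le]
  constructor <;> linarith

end VerticalForce

/-- The tilt `w = sin θ` clamped to the values allowed by the a priori bound `tan θ ≤ m r`.
For `r ≤ 0` (and `0 ≤ m`) it vanishes, so that all functions below make sense on the whole line. -/
noncomputable def clampedTilt (m r w : ℝ) : ℝ := max 0 (min w (sin (arctan (m * r))))

/-- The slope `tan θ` read off from the clamped tilt. -/
noncomputable def clampedSlope (m : ℝ) (x : ℝ → ℝ) (r : ℝ) : ℝ :=
  tan (arcsin (clampedTilt m r (x r)))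

/-- The height with initial value `a` and slope `clampedSlope m x`. -/
noncomputable def clampedHeight (m a : ℝ) (x : ℝ → ℝ) (r : ℝ) : ℝ :=
  a + ∫ s in (0 : ℝ)..r, clampedSlope m x s

/-- The right-hand side `cos θ * (u / 2 + Q / u)` of the tilt equation
`w' + (n / r + r / 2) w = cos θ * (u / 2 + Q / u)`, with clamped `θ` and `u`. -/
noncomputable def clampedForce (m Q a : ℝ) (x : ℝ → ℝ) (r : ℝ) : ℝ :=
  cos (arcsin (clampedTilt m r (x r))) * verticalForce Q (clampedHeight m a x r)

section Clamped

variable {m Q a r : ℝ} {x y : ℝ → ℝ}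

theorem clampedTilt_mem_Icc (hmr : 0 ≤ m * r) (w : ℝ) :
    clampedTilt m r w ∈ Icc 0 (sin (arctan (m * r))) :=
  ⟨le_max_left _ _, max_le (sin_arctan_nonneg.2 hmr) (min_le_right _ _)⟩

theorem clampedTilt_of_nonpos (hmr : m * r ≤ 0) (w : ℝ) : clampedTilt m r w = 0 :=
  max_eq_left ((min_le_right _ _).trans (sin_arctan_le_zero.2 hmr))

theorem clampedTilt_mem_Ioo (m r w : ℝ) : clampedTilt m r w ∈ Ioo (-1) 1 := by
  rcases le_total 0 (m * r) with hmr | hmr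
  · exact Icc_zero_sin_arctan_subset_Ioo (clampedTilt_mem_Icc hmr w)
  · simp [clampedTilt_of_nonpos hmr]

theorem abs_clampedTilt_sub_le (m r w z : ℝ) : |clampedTilt m r w - clampedTilt m r z| ≤ |w - z| :=
  (abs_max_sub_max_le_max _ _ _ _).trans <| by
    simpa using abs_min_sub_min_le_max w (sin (arctan (m * r))) z (sin (arctan (m * r)))

theorem continuous_clampedTilt (m : ℝ) (hx : Continuous x) :
    Continuous fun r => clampedTilt m r (x r) := by
  unfold clampedTilt
  fun_prop

theorem continuous_clampedSlope (m : ℝ) (hx : Continuous x) : Continuous (clampedSlope m x) :=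
  continuous_iff_continuousAt.2 fun r =>
    (hasDerivAt_tan_arcsin (clampedTilt_mem_Ioo m r (x r))).continuousAt.comp
      (f := fun r => clampedTilt m r (x r)) (continuous_clampedTilt m hx).continuousAt

theorem clampedSlope_mem_Icc (hmr : 0 ≤ m * r) (x : ℝ → ℝ) : clampedSlope m x r ∈ Icc 0 (m * r) :=
  tan_arcsin_mem_Icc (clampedTilt_mem_Icc hmr (x r))

theorem clampedSlope_of_nonpos (hmr : m * r ≤ 0) (x : ℝ → ℝ) : clampedSlope m x r = 0 := by
  simp [clampedSlope, clampedTilt_of_nonpos hmr]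

theorem hasDerivAt_clampedHeight (m a : ℝ) (hx : Continuous x) (r : ℝ) :
    HasDerivAt (clampedHeight m a x) (clampedSlope m x r) r :=
  ((continuous_clampedSlope m hx).integral_hasStrictDerivAt 0 r).hasDerivAt.const_add a

theorem continuous_clampedHeight (m a : ℝ) (hx : Continuous x) :
    Continuous (clampedHeight m a x) :=
  continuous_iff_continuousAt.2 fun r => (hasDerivAt_clampedHeight m a hx r).continuousAt

theorem le_clampedHeight (hm : 0 ≤ m) (a : ℝ) (x : ℝ → ℝ) (r : ℝ) : a ≤ clampedHeight m a x r := by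
  refine le_add_of_nonneg_right ?_
  rcases le_total 0 r with hr | hr
  · exact intervalIntegral.integral_nonneg hr fun s hs =>
      (clampedSlope_mem_Icc (mul_nonneg hm hs.1) x).1
  · rw [intervalIntegral.integral_congr (g := fun _ => 0) fun s hs => ?_,
      intervalIntegral.integral_zero]
    rw [uIcc_of_ge hr] at hs
    exact clampedSlope_of_nonpos (mul_nonpos_of_nonneg_of_nonpos hm hs.2) x

theorem clampedHeight_le (hm : 0 ≤ m) (a : ℝ) (hx : Continuous x) (hr : 0 ≤ r) :
    clampedHeight m a x r ≤ a + m * r ^ 2 / 2 := by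
  have hint : ∫ s in (0 : ℝ)..r, clampedSlope m x s ≤ ∫ s in (0 : ℝ)..r, m * s :=
    intervalIntegral.integral_mono_on hr ((continuous_clampedSlope m hx).intervalIntegrable _ _)
      ((continuous_const_mul m).intervalIntegrable _ _)
      fun s hs => (clampedSlope_mem_Icc (mul_nonneg hm hs.1) x).2
  rw [intervalIntegral.integral_const_mul, integral_id] at hint
  unfold clampedHeight
  linarith

theorem abs_clampedHeight_sub_le (hm : 0 ≤ m) (a : ℝ) (hx : Continuous x) (hy : Continuous y)
    (hr : 0 ≤ r) {D : ℝ} (hxy : ∀ s ∈ Icc 0 r, |x s - y s| ≤ D) :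
    |clampedHeight m a x r - clampedHeight m a y r| ≤ (1 + (m * r) ^ 2) ^ 2 * r * D := by
  have hslope (s : ℝ) (hs : s ∈ Ioc 0 r) :
      |clampedSlope m x s - clampedSlope m y s| ≤ (1 + (m * r) ^ 2) ^ 2 * D :=
    have hms := mul_nonneg hm hs.1.le
    calc |clampedSlope m x s - clampedSlope m y s|
        ≤ (1 + (m * s) ^ 2) ^ 2 * |clampedTilt m s (x s) - clampedTilt m s (y s)| :=
          abs_tan_arcsin_sub_le (clampedTilt_mem_Icc hms _) (clampedTilt_mem_Icc hms _)
      _ ≤ (1 + (m * r) ^ 2) ^ 2 * D := by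
        gcongr
        · exact hs.2
        · exact (abs_clampedTilt_sub_le m s _ _).trans (hxy s ⟨hs.1.le, hs.2⟩)
  rw [clampedHeight, clampedHeight, add_sub_add_left_eq_sub,
    ← intervalIntegral.integral_sub ((continuous_clampedSlope m hx).intervalIntegrable _ _)
      ((continuous_clampedSlope m hy).intervalIntegrable _ _)]
  calc |∫ s in (0 : ℝ)..r, (clampedSlope m x s - clampedSlope m y s)|
      ≤ (1 + (m * r) ^ 2) ^ 2 * D * |r - 0| :=
        intervalIntegral.norm_integral_le_of_norm_le_const
          (f := fun s => clampedSlope m x s - clampedSlope m y s)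
          fun s hs => hslope s (by rwa [uIoc_of_le hr] at hs)
    _ = (1 + (m * r) ^ 2) ^ 2 * r * D := by
      rw [sub_zero, abs_of_nonneg hr]
      ring

theorem verticalForce_clampedHeight_le (hm : 0 ≤ m) (hQ : 0 ≤ Q) (ha : 0 < a) (hx : Continuous x)
    (hr : 0 ≤ r) : verticalForce Q (clampedHeight m a x r) ≤ a / 2 + Q / a + m * r ^ 2 / 4 := by
  linarith [verticalForce_le hQ ha (le_clampedHeight hm a x r), clampedHeight_le hm a hx hr]

theorem clampedForce_pos (hm : 0 ≤ m) (hQ : 0 ≤ Q) (ha : 0 < a) (x : ℝ → ℝ) (r : ℝ) :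
    0 < clampedForce m Q a x r :=
  mul_pos (cos_arcsin_pos (clampedTilt_mem_Ioo m r _))
    (verticalForce_pos hQ (ha.trans_le (le_clampedHeight hm a x r)))

theorem continuous_clampedForce (hm : 0 ≤ m) (Q : ℝ) (ha : 0 < a) (hx : Continuous x) :
    Continuous (clampedForce m Q a x) := by
  have hheight := continuous_clampedHeight m a hx
  have hne (r : ℝ) : clampedHeight m a x r ≠ 0 := (ha.trans_le (le_clampedHeight hm a x r)).ne'
  exact (continuous_cos.comp (continuous_arcsin.comp (continuous_clampedTilt m hx))).mul
    ((hheight.div_const 2).add (continuous_const.div hheight hne))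

theorem abs_clampedForce_sub_le (hm : 0 ≤ m) (hQ : 0 ≤ Q) (ha : 0 < a) (hx : Continuous x)
    (hy : Continuous y) (hr : 0 ≤ r) {D : ℝ} (hxy : ∀ s ∈ Icc 0 r, |x s - y s| ≤ D) :
    |clampedForce m Q a x r - clampedForce m Q a y r| ≤
      (m * r * (a / 2 + Q / a + m * r ^ 2 / 4)
        + (1 / 2 + Q / a ^ 2) * ((1 + (m * r) ^ 2) ^ 2 * r)) * D := by
  have hmr := mul_nonneg hm hr
  set cx := cos (arcsin (clampedTilt m r (x r)))
  set cy := cos (arcsin (clampedTilt m r (y r)))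
  set Fx := verticalForce Q (clampedHeight m a x r)
  set Fy := verticalForce Q (clampedHeight m a y r)
  have hc : |cx - cy| ≤ m * r * D :=
    (abs_cos_arcsin_sub_le (clampedTilt_mem_Icc hmr _) (clampedTilt_mem_Icc hmr _)).trans <| by
      gcongr
      exact (abs_clampedTilt_sub_le m r _ _).trans (hxy r (right_mem_Icc.2 hr))
  have hF : |Fx - Fy| ≤ (1 / 2 + Q / a ^ 2) * ((1 + (m * r) ^ 2) ^ 2 * r * D) :=
    (abs_verticalForce_sub_le hQ ha (le_clampedHeight hm a x r)
      (le_clampedHeight hm a y r)).trans <| by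
      gcongr
      exact abs_clampedHeight_sub_le hm a hx hy hr hxy
  have hFx_abs : |Fx| ≤ a / 2 + Q / a + m * r ^ 2 / 4 := by
    rw [abs_of_pos (verticalForce_pos hQ (ha.trans_le (le_clampedHeight hm a x r)))]
    exact verticalForce_clampedHeight_le hm hQ ha hx hr
  calc |cx * Fx - cy * Fy|
      = |(cx - cy) * Fx + cy * (Fx - Fy)| := by ring_nf
    _ ≤ |cx - cy| * |Fx| + |cy| * |Fx - Fy| := by
      simpa only [abs_mul] using abs_add_le ((cx - cy) * Fx) (cy * (Fx - Fy))
    _ ≤ m * r * D * (a / 2 + Q / a + m * r ^ 2 / 4)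
        + 1 * ((1 / 2 + Q / a ^ 2) * ((1 + (m * r) ^ 2) ^ 2 * r * D)) := by
      gcongr
      · exact (abs_nonneg _).trans hc
      · exact abs_cos_le_one _
    _ = _ := by ring

end Clamped

/-! ### Profiles -/

section APrioriBound

variable {n m Q a r : ℝ} {x : ℝ → ℝ}

theorem exists_eqOn_weightedAverage_clampedForce (hn : 0 ≤ n) (hm : 0 ≤ m) (hQ : 0 ≤ Q)
    (ha : 0 < a) :
    ∃ x, Continuous x ∧ EqOn (weightedAverage (radialWeight n) (clampedForce m Q a x)) x (Ici 0) :=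
  (isIntegratingFactor_radialWeight hn).exists_eqOn_weightedAverage
    (fun _ hx => continuous_clampedForce hm Q ha hx)
    (L := fun r => m * r * (a / 2 + Q / a + m * r ^ 2 / 4)
      + (1 / 2 + Q / a ^ 2) * ((1 + (m * r) ^ 2) ^ 2 * r)) (by fun_prop)
    (fun _ _ hx hy _ hr _ hxy => abs_clampedForce_sub_le hm hQ ha hx hy hr hxy)

/- `tan θ = m r` is a strict supersolution of the tilt equation. -/
theorem clampedForce_lt_of_sin_arctan_le (hm : 0 < m) (hQ : 0 ≤ Q) (ha : 0 < a)
    (hnm : n * m = a / 2 + Q / a) (hx : Continuous x) (hr : 0 < r)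
    (hxr : sin (arctan (m * r)) ≤ x r) :
    clampedForce m Q a x r < (n / r + r / 2) * sin (arctan (m * r)) := by
  have hmr : 0 < m * r := mul_pos hm hr
  have htilt : clampedTilt m r (x r) = sin (arctan (m * r)) := by
    rw [clampedTilt, min_eq_right hxr, max_eq_right (sin_arctan_nonneg.2 hmr.le)]
  have hforce : verticalForce Q (clampedHeight m a x r) < n * m + m * r ^ 2 / 2 := by
    have := verticalForce_clampedHeight_le hm.le hQ ha hx hr.le
    nlinarith [mul_pos hm (pow_pos hr 2)]
  rw [clampedForce, htilt,
    arcsin_sin (neg_pi_div_two_lt_arctan _).le (arctan_lt_pi_div_two _).le]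
  calc cos (arctan (m * r)) * verticalForce Q (clampedHeight m a x r)
      < cos (arctan (m * r)) * (n * m + m * r ^ 2 / 2) :=
        mul_lt_mul_of_pos_left hforce (cos_arctan_pos _)
    _ = (n / r + r / 2) * sin (arctan (m * r)) := by
        rw [sin_arctan_eq_mul_cos_arctan]
        field_simp

theorem le_sin_arctan_of_hasDerivAt (hn : 0 ≤ n) (hm : 0 < m) (hQ : 0 ≤ Q) (ha : 0 < a)
    (hnm : n * m = a / 2 + Q / a) (hx : Continuous x) (hx₀ : x 0 = 0)
    (hx' : ∀ r > 0, HasDerivAt x (clampedForce m Q a x r - (n / r + r / 2) * x r) r)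
    (hr : 0 ≤ r) : x r ≤ sin (arctan (m * r)) := by
  refine le_of_forall_pos_le_add fun ε hε => ?_
  suffices x r - sin (arctan (m * r)) - ε < 0 by linarith
  have hbarrier (s : ℝ) : HasDerivAt (fun s => sin (arctan (m * s)))
      (cos (arctan (m * s)) * (1 / (1 + (m * s) ^ 2) * m)) s :=
    (((hasDerivAt_id s).const_mul m).congr_deriv (mul_one m)).arctan.sin
  refine neg_of_deriv_neg_at_first_zero (r₀ := 0)
    (f := fun s => x s - sin (arctan (m * s)) - ε) (by fun_prop)
    (fun s hs => ((hx' s hs).sub (hbarrier s)).sub_const ε) (by simpa [hx₀] using hε)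
    (fun s hs hzero _ => ?_) hr
  have hxs : x s = sin (arctan (m * s)) + ε := by linarith
  have hk : 0 < n / s + s / 2 := by positivity
  have hforce := clampedForce_lt_of_sin_arctan_le hm hQ ha hnm hx hs (by linarith)
  have hbarrier_nonneg : 0 ≤ cos (arctan (m * s)) * (1 / (1 + (m * s) ^ 2) * m) :=
    mul_nonneg (cos_arctan_pos _).le (by positivity)
  rw [hxs]
  linarith [mul_pos hk hε]

end APrioriBound

/-- A solution `u` of the self-expander equation with slope `v = u'` and `u 0 = a`, `v 0 = 0`,
where `n = p - 1` and `Q = q - 1`, together with the a priori bounds `a ≤ u` and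
`0 ≤ n v ≤ (a / 2 + Q / a) r`. The values on the negative half-line carry no information; `u` is
required to be differentiable there too so that `u' = v` also holds at `0`. -/
structure IsProfile (n Q a : ℝ) (u v : ℝ → ℝ) : Prop where
  hasDerivAt : ∀ r, HasDerivAt u (v r) r
  continuous_slope : Continuous v
  apply_zero : u 0 = a
  slope_zero : v 0 = 0
  le_apply : ∀ r ≥ 0, a ≤ u r
  slope_nonneg : ∀ r ≥ 0, 0 ≤ v r
  slope_le : ∀ r ≥ 0, n * v r ≤ (a / 2 + Q / a) * r
  hasDerivAt_slope : ∀ r > 0,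
    HasDerivAt v ((1 + v r ^ 2) * (verticalForce Q (u r) - (n / r + r / 2) * v r)) r

theorem exists_isProfile {n Q a : ℝ} (hn : 0 < n) (hQ : 0 ≤ Q) (ha : 0 < a) :
    ∃ u v, IsProfile n Q a u v := by
  obtain ⟨m, hnm⟩ : ∃ m, n * m = a / 2 + Q / a := ⟨(a / 2 + Q / a) / n, mul_div_cancel₀ _ hn.ne'⟩
  have hm : 0 < m := by
    refine pos_of_mul_pos_right ?_ hn.le
    rw [hnm]
    positivity
  obtain ⟨x, hx, hfix⟩ := exists_eqOn_weightedAverage_clampedForce hn.le hm.le hQ ha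
  have hΦ := isIntegratingFactor_radialWeight hn.le
  have hx' (r : ℝ) (hr : 0 < r) :
      HasDerivAt x (clampedForce m Q a x r - (n / r + r / 2) * x r) r :=
    hΦ.hasDerivAt_of_eqOn_weightedAverage (continuous_clampedForce hm.le Q ha hx) hfix hr
  have hx₀ : x 0 = 0 := by rw [← hfix self_mem_Ici, weightedAverage_zero]
  have htilt (r : ℝ) (hr : 0 ≤ r) : clampedTilt m r (x r) = x r := by
    have hx_nonneg : 0 ≤ x r := by
      rw [← hfix hr]
      exact hΦ.weightedAverage_nonneg (fun s _ => (clampedForce_pos hm.le hQ ha x s).le) hr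
    rw [clampedTilt, min_eq_left (le_sin_arctan_of_hasDerivAt hn.le hm hQ ha hnm hx hx₀ hx' hr),
      max_eq_right hx_nonneg]
  have hslope (r : ℝ) (hr : 0 ≤ r) : clampedSlope m x r = tan (arcsin (x r)) := by
    rw [clampedSlope, htilt r hr]
  refine ⟨clampedHeight m a x, clampedSlope m x,
    { hasDerivAt := hasDerivAt_clampedHeight m a hx
      continuous_slope := continuous_clampedSlope m hx
      apply_zero := by simp [clampedHeight]
      slope_zero := clampedSlope_of_nonpos (mul_zero m).le x
      le_apply := fun r _ => le_clampedHeight hm.le a x r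
      slope_nonneg := fun r hr => (clampedSlope_mem_Icc (mul_nonneg hm.le hr) x).1
      slope_le := fun r hr => ?_
      hasDerivAt_slope := fun r hr => ?_ }⟩
  · rw [← hnm, mul_assoc]
    exact mul_le_mul_of_nonneg_left (clampedSlope_mem_Icc (mul_nonneg hm.le hr) x).2 hn.le
  · have hxr : x r ∈ Ioo (-1) 1 := htilt r hr.le ▸ clampedTilt_mem_Ioo m r (x r)
    have := hx' r hr
    rw [clampedForce, htilt r hr.le] at this
    rw [hslope r hr.le]
    refine (hasDerivAt_tan_arcsin_of_hasDerivAt hxr this).congr_of_eventuallyEq ?_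
    filter_upwards [Ioi_mem_nhds hr] with s hs using hslope s (mem_Ioi.1 hs).le

/-! ### Asymptotics -/

namespace IsProfile

variable {n Q a : ℝ} {u v : ℝ → ℝ}

theorem continuous (h : IsProfile n Q a u v) : Continuous u :=
  continuous_iff_continuousAt.2 fun r => (h.hasDerivAt r).continuousAt

theorem apply_pos (h : IsProfile n Q a u v) (ha : 0 < a) {r : ℝ} (hr : 0 ≤ r) : 0 < u r :=
  ha.trans_le (h.le_apply r hr)

theorem contDiffOn (h : IsProfile n Q a u v) (ha : 0 < a) : ContDiffOn ℝ 2 u (Ioi 0) := by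
  refine contDiffOn_two_of_hasDerivAt isOpen_Ioi (fun r _ => h.hasDerivAt r) h.hasDerivAt_slope ?_
  have hu : ∀ r ∈ Ioi 0, u r ≠ 0 := fun r hr => (h.apply_pos ha (mem_Ioi.1 hr).le).ne'
  have hid : ∀ r ∈ Ioi (0 : ℝ), r ≠ 0 := fun r hr => (mem_Ioi.1 hr).ne'
  have hu_cont := h.continuous
  have hv_cont := h.continuous_slope
  unfold verticalForce
  fun_prop (disch := assumption)

theorem equation (h : IsProfile n Q a u v) {r : ℝ} (hr : 0 < r) :
    deriv v r / (1 + v r ^ 2) + (n / r + r / 2) * v r - u r / 2 - Q / u r = 0 := by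
  rw [(h.hasDerivAt_slope r hr).deriv, mul_div_cancel_left₀ _ (by positivity), verticalForce]
  ring

theorem slope_pos (h : IsProfile n Q a u v) (hQ : 0 ≤ Q) (ha : 0 < a) {r : ℝ} (hr : 0 < r) :
    0 < v r := by
  refine (h.slope_nonneg r hr.le).lt_of_ne' fun hvr => ?_
  have hmin : IsLocalMin v r := by
    filter_upwards [Ioi_mem_nhds hr] with s hs using hvr ▸ h.slope_nonneg s (mem_Ioi.1 hs).le
  have hzero := hmin.hasDerivAt_eq_zero (h.hasDerivAt_slope r hr)
  rw [hvr] at hzero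
  linarith [verticalForce_pos hQ (h.apply_pos ha hr.le)]

theorem hasDerivAt_sub_mul (h : IsProfile n Q a u v) {r : ℝ} (hr : 0 < r) :
    HasDerivAt (fun r => u r - r * v r)
      (-(r * (1 + v r ^ 2)) * ((u r - r * v r) / 2 + Q / u r - n * v r / r)) r := by
  refine ((h.hasDerivAt r).sub
    ((hasDerivAt_id' r).mul (h.hasDerivAt_slope r hr))).congr_deriv ?_
  rw [verticalForce]
  generalize Q / u r = c
  field_simp
  ring

theorem sub_mul_le (h : IsProfile n Q a u v) (hQ : 0 ≤ Q) (ha : 0 < a) {r : ℝ} (hr : 0 ≤ r) :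
    u r - r * v r ≤ a + 2 * Q / a := by
  have hu := h.continuous
  have hv := h.continuous_slope
  have hQa : 0 ≤ 2 * Q / a := by positivity
  refine le_of_forall_gt_imp_ge_of_dense fun C hC => (sub_neg.1 ?_).le
  refine neg_of_deriv_neg_at_first_zero (f := fun s => u s - s * v s - C) (r₀ := 0) (by fun_prop)
    (fun s hs => (h.hasDerivAt_sub_mul hs).sub_const C)
    (by simpa [h.apply_zero] using (le_add_of_nonneg_right hQa).trans_lt hC)
    (fun s hs hzero _ => ?_) hr
  have hslope : n * v s / s ≤ a / 2 + Q / a := (div_le_iff₀ hs).2 (h.slope_le s hs.le)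
  have hforce : 0 ≤ Q / u s := div_nonneg hQ (h.apply_pos ha hs.le).le
  refine mul_neg_of_neg_of_pos (neg_neg_of_pos (by positivity)) ?_
  linarith [mul_div_assoc 2 Q a]

theorem neg_le_sub_mul (h : IsProfile n Q a u v) (hn : 0 ≤ n) (hQ : 0 ≤ Q) (ha : 0 < a) {r : ℝ}
    (hr : 0 ≤ r) : -(2 * Q / a) ≤ u r - r * v r := by
  have hu := h.continuous
  have hv := h.continuous_slope
  have hQa : 0 ≤ 2 * Q / a := by positivity
  refine neg_le.1 (le_of_forall_gt_imp_ge_of_dense fun C hC => (sub_neg.1 ?_).le)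
  refine neg_of_deriv_neg_at_first_zero (f := fun s => -(u s - s * v s) - C) (r₀ := 0)
    (by fun_prop) (fun s hs => (h.hasDerivAt_sub_mul hs).fun_neg.sub_const C)
    (by simp only [zero_mul, sub_zero, h.apply_zero]; linarith) (fun s hs hzero _ => ?_) hr
  have hslope : 0 ≤ n * v s / s := div_nonneg (mul_nonneg hn (h.slope_nonneg s hs.le)) hs.le
  have hforce : Q / u s ≤ Q / a := div_le_div_of_nonneg_left hQ ha (h.le_apply s hs.le)
  rw [neg_mul, neg_neg]
  refine mul_neg_of_pos_of_neg (by positivity) ?_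
  linarith [mul_div_assoc 2 Q a]

theorem abs_sub_mul_le (h : IsProfile n Q a u v) (hn : 0 ≤ n) (hQ : 0 ≤ Q) (ha : 0 < a) {r : ℝ}
    (hr : 0 ≤ r) : |u r - r * v r| ≤ a + 2 * Q / a := by
  rw [abs_le]
  exact ⟨by linarith [h.neg_le_sub_mul hn hQ ha hr], h.sub_mul_le hQ ha hr⟩

theorem mul_sub_le_of_le_slope (h : IsProfile n Q a u v) {δ s r : ℝ} (hsr : s ≤ r)
    (hδ : ∀ t ∈ Ioo s r, δ ≤ v t) : δ * (r - s) ≤ u r - u s := by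
  refine (convex_Icc s r).mul_sub_le_image_sub_of_le_deriv h.continuous.continuousOn
    (fun t _ => (h.hasDerivAt t).differentiableAt.differentiableWithinAt) (fun t ht => ?_)
    s (left_mem_Icc.2 hsr) r (right_mem_Icc.2 hsr) hsr
  rw [interior_Icc] at ht
  rw [(h.hasDerivAt t).deriv]
  exact hδ t ht

/- If `v` first drops to `δ` at `r > 1` then `u r ≥ a + δ (r - 1)`, and for `δ (1 + 2 n) < a` the
equation gives `v' r > 0`. -/
theorem exists_pos_le_slope (h : IsProfile n Q a u v) (hn : 0 ≤ n) (hQ : 0 ≤ Q) (ha : 0 < a) :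
    ∃ δ > 0, ∀ r ≥ 1, δ ≤ v r := by
  have hv_one := h.slope_pos hQ ha one_pos
  obtain ⟨δ, hδ, hδ_lt⟩ :=
    exists_between (lt_min hv_one (div_pos ha (by positivity : 0 < 1 + 2 * n)))
  obtain ⟨hδv, hδa⟩ := lt_min_iff.1 hδ_lt
  rw [lt_div_iff₀ (by positivity)] at hδa
  have hv := h.continuous_slope
  refine ⟨δ, hδ, fun r hr => (sub_neg.1 ?_).le⟩
  refine neg_of_deriv_neg_at_first_zero (f := fun s => δ - v s) (r₀ := 1) (by fun_prop)
    (fun s hs => (h.hasDerivAt_slope s (one_pos.trans hs)).const_sub δ) (sub_neg.2 hδv)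
    (fun s hs hzero hbefore => ?_) hr
  have hs₀ : 0 < s := one_pos.trans hs
  have hvs : v s = δ := (sub_eq_zero.1 hzero).symm
  have hgrowth : δ * (s - 1) ≤ u s - u 1 := h.mul_sub_le_of_le_slope hs.le fun t ht =>
    (sub_neg.1 (hbefore t ⟨ht.1.le, ht.2⟩)).le
  have hforce : 0 ≤ Q / u s := div_nonneg hQ (h.apply_pos ha hs₀.le).le
  have hns : n / s ≤ n := div_le_self hn hs.le
  rw [hvs]
  refine neg_neg_of_pos (mul_pos (by positivity) ?_)
  unfold verticalForce
  nlinarith [h.le_apply 1 zero_le_one, mul_le_mul_of_nonneg_right hns hδ.le]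

theorem exists_tendsto (h : IsProfile n Q a u v) (hn : 0 ≤ n) (hQ : 0 ≤ Q) (ha : 0 < a) :
    ∃ lam > 0, Tendsto (fun r => u r / r) atTop (𝓝 lam) ∧ Tendsto v atTop (𝓝 lam) := by
  obtain ⟨lam, hu_lim, hv_lim⟩ := exists_tendsto_div_of_abs_sub_mul_le
    (fun r _ => h.hasDerivAt r) fun r hr => h.abs_sub_mul_le hn hQ ha (le_of_lt hr)
  obtain ⟨δ, hδ, hδv⟩ := h.exists_pos_le_slope hn hQ ha
  refine ⟨lam, hδ.trans_le (ge_of_tendsto hv_lim ?_), hu_lim, hv_lim⟩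
  filter_upwards [eventually_ge_atTop 1] using hδv

end IsProfile

end SelfExpander

theorem self_expander_exists_general (p q : ℝ) (hp : 1 < p) (hq : 1 ≤ q) (a : ℝ) (ha : 0 < a) :
    ∃ (u u' : ℝ → ℝ) (lam : ℝ),
      0 < lam ∧
      (∀ r ≥ (0 : ℝ), 0 < u r) ∧
      ContinuousOn u (Set.Ici 0) ∧
      ContDiffOn ℝ 2 u (Set.Ioi 0) ∧
      u 0 = a ∧
      ContinuousOn u' (Set.Ici 0) ∧
      u' 0 = 0 ∧
      (∀ r > (0 : ℝ), HasDerivAt u (u' r) r) ∧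
      (∀ r > (0 : ℝ),
          deriv u' r / (1 + (u' r) ^ 2)
            + ((p - 1) / r + r / 2) * u' r - u r / 2 - (q - 1) / u r = 0) ∧
      Tendsto (fun r => u r / r) atTop (nhds lam) ∧
      Tendsto u' atTop (nhds lam) := by
  have hn : 0 < p - 1 := sub_pos.2 hp
  have hQ : 0 ≤ q - 1 := sub_nonneg.2 hq
  obtain ⟨u, v, h⟩ := SelfExpander.exists_isProfile hn hQ ha
  obtain ⟨lam, hlam, hu_lim, hv_lim⟩ := h.exists_tendsto hn.le hQ ha
  exact ⟨u, v, lam, hlam, fun r hr => h.apply_pos ha hr, h.continuous.continuousOn,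
    h.contDiffOn ha, h.apply_zero, h.continuous_slope.continuousOn, h.slope_zero,
    fun r _ => h.hasDerivAt r, fun r hr => h.equation hr, hu_lim, hv_lim⟩

/-- Existence of rotationally symmetric self-expanders: for every `a > 0` there is a
profile `u_a` with `u_a(0) = a`, `u_a′(0) = 0`, solving the self-expander ODE on `(0,∞)`,
and asymptotic to some cone slope `λ(a) ∈ (0, ∞)` at infinity. -/
theorem self_expander_exists (p q : ℕ) (hp : 2 ≤ p) (hq : 2 ≤ q) (a : ℝ) (ha : 0 < a) :
    ∃ (u u' : ℝ → ℝ) (lam : ℝ),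
      0 < lam ∧
      (∀ r ≥ (0 : ℝ), 0 < u r) ∧
      ContinuousOn u (Set.Ici 0) ∧
      ContDiffOn ℝ 2 u (Set.Ioi 0) ∧
      u 0 = a ∧
      ContinuousOn u' (Set.Ici 0) ∧
      u' 0 = 0 ∧
      (∀ r > (0 : ℝ), HasDerivAt u (u' r) r) ∧
      (∀ r > (0 : ℝ),
          deriv u' r / (1 + (u' r) ^ 2)
            + (((p : ℝ) - 1) / r + r / 2) * u' r - u r / 2 - ((q : ℝ) - 1) / u r = 0) ∧
      Tendsto (fun r => u r / r) atTop (nhds lam) ∧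
      Tendsto u' atTop (nhds lam) :=
  self_expander_exists_general p q (by exact_mod_cast hp)
    (by exact_mod_cast one_le_two.trans hq) a ha
end
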